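/- Let p ≥ 1 and r ≥ 1 be integers such that p ≥ 2 or r ≥ 2, and let G = ⟨a₁,…,a_p, s₁,…,s_r | s₁²,…,s_r², a₁²a₂²⋯a_p²·s₁s₂⋯s_r⟩ be the fundamental group of the closed non-orientable 2-orbifold of genus p with r cone points, all of order 2. Then every generating n-tuple of G is either reducible, or n = p + r − 1 and the tuple is Nielsen equivalent to (a₁,…,a_p, s₁,…,s_{i−1}, s_{i+1},…,s_r) for some index 1 ≤ i ≤ r (the images of the standard generators with exactly one s_i omitted). -/

import Mathlib

/-- An elementary Nielsen transformation on an `n`-tuple of elements of a group: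
(T1) invert an entry, (T2) swap two distinct entries, (T3) replace an entry by its
product with another (distinct) entry. -/
inductive NielsenStep {G : Type*} [Group G] {n : ℕ} : (Fin n → G) → (Fin n → G) → Prop
  | inv (T : Fin n → G) (i : Fin n) : NielsenStep T (Function.update T i (T i)⁻¹)
  | swap (T : Fin n → G) (i j : Fin n) (hij : i ≠ j) : NielsenStep T (T ∘ Equiv.swap i j)
  | mul (T : Fin n → G) (i j : Fin n) (hij : i ≠ j) :
      NielsenStep T (Function.update T i (T i * T j))

/-- Two `n`-tuples of elements of a group are Nielsen equivalent if a finite chain of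
elementary Nielsen transformations carries one to the other. -/
def NielsenEquiv {G : Type*} [Group G] {n : ℕ} (T T' : Fin n → G) : Prop :=
  Relation.ReflTransGen NielsenStep T T'

/-- A tuple is reducible if it is Nielsen equivalent to a tuple whose last entry is the
identity. -/
def Reducible {G : Type*} [Group G] {n : ℕ} (T : Fin n → G) : Prop :=
  ∃ (hn : 0 < n) (T' : Fin n → G), NielsenEquiv T T' ∧ T' ⟨n - 1, by omega⟩ = 1

/-- The relator `a₁²a₂²⋯a_p² · s₁s₂⋯s_r` in the free group on the generators `a₁,…,a_p`
(left summand) and `s₁,…,s_r` (right summand). -/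
def coneRelatorN (p r : ℕ) : FreeGroup (Fin p ⊕ Fin r) :=
  (List.ofFn fun j : Fin p =>
      (FreeGroup.of (Sum.inl j) : FreeGroup (Fin p ⊕ Fin r)) ^ 2).prod *
    (List.ofFn fun i : Fin r => FreeGroup.of (Sum.inr i)).prod

/-- The relations `s₁², …, s_r²` and `a₁²a₂²⋯a_p²·s₁s₂⋯s_r`. -/
def coneRelsN (p r : ℕ) : Set (FreeGroup (Fin p ⊕ Fin r)) :=
  {w | (∃ i : Fin r, w = FreeGroup.of (Sum.inr i) ^ 2) ∨ w = coneRelatorN p r}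

/-!
Omitting one cone generator from the standard ones presents `G` as a quotient of a free group `P`
of rank `p + r - 1`, and the whole theorem comes down to lifting a generating tuple `T` of `G` to
a generating tuple of `P`: by Nielsen's theorem the lift is reducible or equivalent to a basis.

The lift is found by folding. Write the entries of `T` as words in the generators and consider the
rose having these words as petals. Folding edges, gluing the two ends of a path that reads
the relator, and attaching hairs all transform a graph labeled by `G` into another one without
changing the tuple carried by its loops, and lifts to `P` are pulled back along each move. The
only delicate move is the gluing of a path reading the relator whose ends differ: it creates a
loop that is trivial in `G`. The 2-complex whose faces are the closed relator paths is then
collapsible onto a smaller graph: a set of faces without a free edge either contains the glued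
face, which is excluded by a parity count, or is a one-sheeted cover of the presentation complex,
in which the edge of a cone letter would lie on only one face after all. As `T` generates `G`,
every letter eventually becomes a loop at the base point, and the standard rose lifts to `P`.
-/

/-! ### Products around a cycle -/

section CycProd

variable {H K : Type*} [Group H] [Group K] {L : ℕ}

/-- The product `f k * f (k + 1) * ⋯ * f (k - 1)` once around the cycle `ZMod L`. -/
def cycProd (f : ZMod L → H) (k : ZMod L) : H :=
  ((List.range L).map fun j : ℕ => f (k + j)).prod

/-- The product `f (k + 1) * ⋯ * f (k - 1)` around the cycle `ZMod L` with the factor at `k`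
left out. -/
def cycProdErase (f : ZMod L → H) (k : ZMod L) : H :=
  ((List.range (L - 1)).map fun j : ℕ => f (k + 1 + j)).prod

lemma map_cycProd (φ : H →* K) (f : ZMod L → H) (k : ZMod L) :
    φ (cycProd f k) = cycProd (fun i => φ (f i)) k := by
  simp [cycProd, map_list_prod, Function.comp_def]

lemma map_cycProdErase (φ : H →* K) (f : ZMod L → H) (k : ZMod L) :
    φ (cycProdErase f k) = cycProdErase (fun i => φ (f i)) k := by
  simp [cycProdErase, map_list_prod, Function.comp_def]

lemma natCast_ne_zero_of_pos_of_lt {j : ℕ} (h0 : 0 < j) (h : j < L) : (j : ZMod L) ≠ 0 :=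
  fun h1 => Nat.not_dvd_of_pos_of_lt h0 h ((ZMod.natCast_eq_zero_iff j L).1 h1)

lemma cycProdErase_congr {f g : ZMod L → H} {k : ZMod L} (h : ∀ i, i ≠ k → f i = g i) :
    cycProdErase f k = cycProdErase g k := by
  refine congrArg List.prod (List.map_congr_left fun j hj => h _ fun hk => ?_)
  have hj : j < L - 1 := List.mem_range.1 hj
  exact natCast_ne_zero_of_pos_of_lt (L := L) j.succ_pos (by omega)
    (by push_cast; linear_combination hk)

variable [NeZero L]

lemma natCast_pred_eq_neg_one : ((L - 1 : ℕ) : ZMod L) = -1 := by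
  rw [Nat.cast_pred (NeZero.pos L), ZMod.natCast_self, zero_sub]

lemma val_neg_one_add_one : (-1 : ZMod L).val + 1 = L := by
  have hL := NeZero.pos L
  rw [← natCast_pred_eq_neg_one, ZMod.val_natCast_of_lt (by omega)]
  omega

lemma val_add_one_of_ne_neg_one {i : ZMod L} (hi : i ≠ -1) : (i + 1).val = i.val + 1 := by
  have hval : i.val ≠ (-1 : ZMod L).val := fun h => hi (ZMod.val_injective L h)
  have hlt : i.val + 1 < L := by
    have h := val_neg_one_add_one (L := L)
    have hi := i.val_lt
    omega
  simpa using ZMod.val_natCast_of_lt hlt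

lemma range_eq_range_pred_succ : List.range L = List.range (L - 1 + 1) := by
  rw [Nat.sub_add_cancel NeZero.one_le]

lemma cycProd_eq_mul_cycProdErase (f : ZMod L → H) (k : ZMod L) :
    cycProd f k = f k * cycProdErase f k := by
  rw [cycProd, cycProdErase, range_eq_range_pred_succ, List.prod_range_succ']
  simp [add_assoc, add_comm (1 : ZMod L)]

lemma cycProd_succ_eq_cycProdErase_mul (f : ZMod L → H) (k : ZMod L) :
    cycProd f (k + 1) = cycProdErase f k * f k := by
  rw [cycProd, cycProdErase, range_eq_range_pred_succ, List.prod_range_succ,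
    natCast_pred_eq_neg_one, add_neg_cancel_right]

lemma cyclic_induction {p : ZMod L → Prop} {k : ZMod L} (h : p k) (hs : ∀ i, p i → p (i + 1))
    (j : ZMod L) : p j := by
  have hn (n : ℕ) : p (k + n) := by
    induction n with
    | zero => simpa using h
    | succ n ih => simpa [add_assoc] using hs _ ih
  simpa using hn (j - k).val

lemma cyclic_iff_of_iff_succ_of_ne {p : ZMod L → Prop} {k : ZMod L}
    (h : ∀ i, i ≠ k → (p i ↔ p (i + 1))) (j : ZMod L) : p j ↔ p (k + 1) := by
  have hn (n : ℕ) (hL : n < L) : p (k + 1 + n) ↔ p (k + 1) := by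
    induction n with
    | zero => simp
    | succ n ih =>
      rw [← ih (by omega), h (k + 1 + n)]
      · push_cast; rw [add_assoc (k + 1)]
      · intro hk
        exact natCast_ne_zero_of_pos_of_lt n.succ_pos hL (by push_cast; linear_combination hk)
  simpa using hn (j - (k + 1)).val (ZMod.val_lt _)

lemma cycProd_eq_one_of_eq_one {f : ZMod L → H} {k : ZMod L} (h : cycProd f k = 1)
    (j : ZMod L) : cycProd f j = 1 := by
  refine cyclic_induction (p := fun j => cycProd f j = 1) h (fun i hi => ?_) j
  rw [cycProd_eq_mul_cycProdErase] at hi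
  rw [cycProd_succ_eq_cycProdErase_mul, eq_inv_of_mul_eq_one_right hi, inv_mul_cancel]

end CycProd

/-! ### Labeled graphs and walks -/

/-- An edge name together with a direction of travel. -/
@[ext]
structure Dart where
  /-- The name of the underlying edge. -/
  edge : ℕ
  /-- Whether the edge is crossed from its source to its target. -/
  fwd : Bool
deriving DecidableEq, Inhabited

/-- The dart crossing the same edge in the other direction. -/
def Dart.rev (d : Dart) : Dart := ⟨d.edge, !d.fwd⟩

@[simp] lemma Dart.rev_edge (d : Dart) : d.rev.edge = d.edge := rfl

lemma Dart.eq_or_eq_rev {d d' : Dart} (h : d.edge = d'.edge) : d = d' ∨ d = d'.rev := by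
  obtain ⟨e, b⟩ := d
  obtain ⟨e', b'⟩ := d'
  obtain rfl : e = e' := h
  cases b <;> cases b' <;> simp [Dart.rev]

/-- The value of a dart under a labeling of the edge names by elements of a group: crossing an
edge backwards contributes the inverse. -/
def Dart.value {H : Type*} [Group H] (μ : ℕ → H) (d : Dart) : H :=
  if d.fwd then μ d.edge else (μ d.edge)⁻¹

/-- A finite directed graph with edges labeled in `X` and a base vertex. Vertices are natural
numbers; the end points and the label are junk for a name outside `edges`. Edges carry names, since
parallel edges with equal labels must be kept apart. -/
structure LabeledGraph (X : Type*) where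
  /-- The names of the edges. -/
  edges : Finset ℕ
  /-- The initial vertex of an edge. -/
  source : ℕ → ℕ
  /-- The terminal vertex of an edge. -/
  target : ℕ → ℕ
  /-- The label of an edge. -/
  label : ℕ → X
  /-- The base vertex. -/
  base : ℕ

namespace Dart

variable {H : Type*} [Group H]

@[simp] lemma value_true (μ : ℕ → H) (e : ℕ) : value μ ⟨e, true⟩ = μ e := rfl

@[simp] lemma value_false (μ : ℕ → H) (e : ℕ) : value μ ⟨e, false⟩ = (μ e)⁻¹ := rfl

@[simp] lemma value_rev (μ : ℕ → H) (d : Dart) : value μ d.rev = (value μ d)⁻¹ := by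
  obtain ⟨e, _ | _⟩ := d <;> simp [rev]

end Dart

namespace LabeledGraph

variable {X X' H : Type*} [Group H] {Z : LabeledGraph X} {Y : LabeledGraph X'}
  {μ ν : ℕ → H} {a b c : ℕ} {g h : H}

/-- The initial vertex of a dart. -/
def src (Z : LabeledGraph X) (d : Dart) : ℕ := if d.fwd then Z.source d.edge else Z.target d.edge

/-- The terminal vertex of a dart. -/
def tgt (Z : LabeledGraph X) (d : Dart) : ℕ := if d.fwd then Z.target d.edge else Z.source d.edge

@[simp] lemma src_true (Z : LabeledGraph X) (e : ℕ) : Z.src ⟨e, true⟩ = Z.source e := rfl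

@[simp] lemma src_false (Z : LabeledGraph X) (e : ℕ) : Z.src ⟨e, false⟩ = Z.target e := rfl

@[simp] lemma tgt_true (Z : LabeledGraph X) (e : ℕ) : Z.tgt ⟨e, true⟩ = Z.target e := rfl

@[simp] lemma tgt_false (Z : LabeledGraph X) (e : ℕ) : Z.tgt ⟨e, false⟩ = Z.source e := rfl

@[simp] lemma src_rev (Z : LabeledGraph X) (d : Dart) : Z.src d.rev = Z.tgt d := by
  obtain ⟨e, _ | _⟩ := d <;> rfl

@[simp] lemma tgt_rev (Z : LabeledGraph X) (d : Dart) : Z.tgt d.rev = Z.src d := by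
  obtain ⟨e, _ | _⟩ := d <;> rfl

/-- `Z.IsWalk μ a g b`: some edge walk in `Z` from `a` to `b` has `μ`-value `g`. -/
inductive IsWalk (Z : LabeledGraph X) (μ : ℕ → H) : ℕ → H → ℕ → Prop
  | nil (a : ℕ) : IsWalk Z μ a 1 a
  | cons (d : Dart) (g : H) (c : ℕ) (hd : d.edge ∈ Z.edges) (h : IsWalk Z μ (Z.tgt d) g c) :
      IsWalk Z μ (Z.src d) (d.value μ * g) c

namespace IsWalk

lemma append (h₁ : Z.IsWalk μ a g b) (h₂ : Z.IsWalk μ b h c) : Z.IsWalk μ a (g * h) c := by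
  induction h₁ with
  | nil a => simpa using h₂
  | cons d g c hd _ ih => rw [mul_assoc]; exact cons d _ _ hd (ih h₂)

lemma dart {d : Dart} (hd : d.edge ∈ Z.edges) : Z.IsWalk μ (Z.src d) (d.value μ) (Z.tgt d) := by
  simpa using cons d 1 _ hd (nil (μ := μ) (Z.tgt d))

lemma edge {e : ℕ} (he : e ∈ Z.edges) : Z.IsWalk μ (Z.source e) (μ e) (Z.target e) :=
  dart (d := ⟨e, true⟩) he

lemma symm (hw : Z.IsWalk μ a g b) : Z.IsWalk μ b g⁻¹ a := by
  induction hw with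
  | nil a => simpa using nil a
  | cons d g c hd _ ih =>
    rw [mul_inv_rev]
    exact ih.append (by simpa using dart (μ := μ) (d := d.rev) hd)

lemma cast {a' b' : ℕ} {g' : H} (hw : Z.IsWalk μ a g b) (ha : a = a') (hg : g = g')
    (hb : b = b') : Z.IsWalk μ a' g' b' := by
  subst ha hg hb; exact hw

/-- The values of the image walk may be twisted by a gauge `γ` on the vertices. -/
lemma map_gauge (q : ℕ → ℕ) (γ : ℕ → H)
    (hE : ∀ e ∈ Z.edges, Y.IsWalk ν (q (Z.source e))
      (γ (Z.source e) * μ e * (γ (Z.target e))⁻¹) (q (Z.target e)))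
    (hw : Z.IsWalk μ a g b) : Y.IsWalk ν (q a) (γ a * g * (γ b)⁻¹) (q b) := by
  induction hw with
  | nil a => simpa using nil (q a)
  | cons d g c hd _ ih =>
    obtain ⟨e, _ | _⟩ := d
    · exact ((hE e hd).symm.append ih).cast rfl (by simp [mul_assoc]) rfl
    · exact ((hE e hd).append ih).cast rfl (by simp [mul_assoc]) rfl

lemma map_vertices (q : ℕ → ℕ)
    (hE : ∀ e ∈ Z.edges, Y.IsWalk ν (q (Z.source e)) (μ e) (q (Z.target e)))
    (hw : Z.IsWalk μ a g b) : Y.IsWalk ν (q a) g (q b) := by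
  simpa using map_gauge q 1 (by simpa using hE) hw

lemma mul_mul_inv_mem {S : Subgroup H} (γ : ℕ → H)
    (hE : ∀ e ∈ Z.edges, γ (Z.source e) * μ e * (γ (Z.target e))⁻¹ ∈ S)
    (hw : Z.IsWalk μ a g b) : γ a * g * (γ b)⁻¹ ∈ S := by
  induction hw with
  | nil a => simp
  | cons d g c hd _ ih =>
    obtain ⟨e, _ | _⟩ := d
    · simpa [mul_assoc] using S.mul_mem (S.inv_mem (hE e hd)) ih
    · simpa [mul_assoc] using S.mul_mem (hE e hd) ih

lemma of_darts (D : ℕ → Dart) (x : ℕ → ℕ) (n : ℕ)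
    (h : ∀ j < n, (D j).edge ∈ Z.edges ∧ Z.src (D j) = x j ∧ Z.tgt (D j) = x (j + 1)) :
    Z.IsWalk μ (x 0) ((List.range n).map fun j => (D j).value μ).prod (x n) := by
  induction n with
  | zero => simpa using nil (x 0)
  | succ n ih =>
    obtain ⟨ha, hb, hc⟩ := h n n.lt_succ_self
    rw [List.prod_range_succ]
    exact (ih fun j hj => h j (by omega)).append ((dart ha).cast hb rfl hc)

end IsWalk

end LabeledGraph

namespace Dart

variable {H : Type*} [Group H] {μ ν : ℕ → H}

lemma map_value_eq_iff {K : Type*} [Group K] {κ : ℕ → K} (φ : H →* K) (d : Dart) :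
    φ (value μ d) = value κ d ↔ φ (μ d.edge) = κ d.edge := by
  obtain ⟨e, _ | _⟩ := d <;> simp

lemma value_congr {d : Dart} (h : μ d.edge = ν d.edge) : value μ d = value ν d := by
  simp only [value, h]

@[simp] lemma value_update_self (d : Dart) (g : H) :
    value (Function.update μ d.edge (if d.fwd then g else g⁻¹)) d = g := by
  obtain ⟨e, _ | _⟩ := d <;> simp

end Dart

namespace LabeledGraph

variable {X H : Type*} [Group H] {Z Z' : LabeledGraph X} {μ ν : ℕ → H} {a b : ℕ} {g : H}

/-- Removes an edge; the vertices stay. -/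
def eraseEdge (Z : LabeledGraph X) (e : ℕ) : LabeledGraph X :=
  { Z with edges := Z.edges.erase e }

/-- The quotient graph obtained by identifying vertices along `q`. -/
def mapVertices (Z : LabeledGraph X) (q : ℕ → ℕ) : LabeledGraph X :=
  { Z with source := fun e => q (Z.source e), target := fun e => q (Z.target e), base := q Z.base }

@[simp] lemma src_mapVertices (Z : LabeledGraph X) (q : ℕ → ℕ) (d : Dart) :
    (Z.mapVertices q).src d = q (Z.src d) :=
  (apply_ite q _ _ _).symm

@[simp] lemma tgt_mapVertices (Z : LabeledGraph X) (q : ℕ → ℕ) (d : Dart) :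
    (Z.mapVertices q).tgt d = q (Z.tgt d) :=
  (apply_ite q _ _ _).symm

/-- Adds an edge named `n` from `u` to `v` with label `x`. -/
def addEdge (Z : LabeledGraph X) (n u : ℕ) (x : X) (v : ℕ) : LabeledGraph X where
  edges := insert n Z.edges
  source := Function.update Z.source n u
  target := Function.update Z.target n v
  label := Function.update Z.label n x
  base := Z.base

section AddEdge

variable {n u v e : ℕ} {x : X} {d : Dart}

lemma mem_edges_addEdge : e ∈ (Z.addEdge n u x v).edges ↔ e = n ∨ e ∈ Z.edges :=
  Finset.mem_insert

lemma label_addEdge (he : e ≠ n) : (Z.addEdge n u x v).label e = Z.label e :=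
  Function.update_of_ne he _ _

lemma source_addEdge (he : e ≠ n) : (Z.addEdge n u x v).source e = Z.source e :=
  Function.update_of_ne he _ _

lemma target_addEdge (he : e ≠ n) : (Z.addEdge n u x v).target e = Z.target e :=
  Function.update_of_ne he _ _

lemma src_addEdge (hd : d.edge ≠ n) : (Z.addEdge n u x v).src d = Z.src d := by
  simp [src, source_addEdge hd, target_addEdge hd]

lemma tgt_addEdge (hd : d.edge ≠ n) : (Z.addEdge n u x v).tgt d = Z.tgt d := by
  simp [tgt, source_addEdge hd, target_addEdge hd]

@[simp] lemma source_addEdge_self : (Z.addEdge n u x v).source n = u :=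
  Function.update_self _ _ _

@[simp] lemma target_addEdge_self : (Z.addEdge n u x v).target n = v :=
  Function.update_self _ _ _

@[simp] lemma label_addEdge_self : (Z.addEdge n u x v).label n = x :=
  Function.update_self _ _ _

end AddEdge

namespace IsWalk

lemma of_mapVertices {q : ℕ → ℕ} (hq : ∀ v, Z.IsWalk μ v 1 (q v))
    (hw : (Z.mapVertices q).IsWalk μ (q a) g (q b)) : Z.IsWalk μ a g b := by
  have hE : ∀ e ∈ (Z.mapVertices q).edges,
      Z.IsWalk μ ((Z.mapVertices q).source e) (μ e) ((Z.mapVertices q).target e) := fun e he =>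
    (((hq (Z.source e)).symm.append (edge he)).append (hq (Z.target e))).cast rfl (by simp) rfl
  have hw' : Z.IsWalk μ (q a) g (q b) := hw.map_vertices id hE
  exact (((hq a).append hw').append (hq b).symm).cast rfl (by simp) rfl

variable {L : ℕ} [NeZero L] {D : ZMod L → Dart} {k : ZMod L}

lemma around_skipping (he : ∀ i, i ≠ k → (D i).edge ∈ Z.edges)
    (hD : ∀ i, i ≠ k → Z.tgt (D i) = Z.src (D (i + 1))) :
    Z.IsWalk μ (Z.src (D (k + 1))) (cycProdErase (fun i => (D i).value μ) k) (Z.src (D k)) := by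
  have hne (j : ℕ) (hj : j < L - 1) : k + 1 + (j : ZMod L) ≠ k := fun hk =>
    natCast_ne_zero_of_pos_of_lt (L := L) j.succ_pos (by omega)
      (by push_cast; linear_combination hk)
  have hw := of_darts (Z := Z) (μ := μ) (fun j => D (k + 1 + j)) (fun j => Z.src (D (k + 1 + j)))
    (L - 1) fun j hj => ⟨he _ (hne j hj), rfl, by
      rw [hD _ (hne j hj), Nat.cast_succ, add_assoc (k + 1)]⟩
  refine hw.cast (by simp) rfl ?_
  rw [natCast_pred_eq_neg_one, add_neg_cancel_right]

lemma eraseEdge (he : ∀ i, (D i).edge ∈ Z.edges) (hD : ∀ i, Z.tgt (D i) = Z.src (D (i + 1)))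
    (hk : ∀ i, i ≠ k → (D i).edge ≠ (D k).edge) (hprod : cycProd (fun i => (D i).value μ) 0 = 1)
    (hw : Z.IsWalk μ a g b) : (Z.eraseEdge (D k).edge).IsWalk μ a g b := by
  have hdetour : (Z.eraseEdge (D k).edge).IsWalk μ (Z.src (D k)) ((D k).value μ)
      (Z.tgt (D k)) := by
    have hskip := around_skipping (Z := Z.eraseEdge (D k).edge) (μ := μ) (D := D) (k := k)
      (fun i hi => Finset.mem_erase.2 ⟨hk i hi, he i⟩) fun i _ => hD i
    have hk' := cycProd_eq_one_of_eq_one hprod k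
    rw [cycProd_eq_mul_cycProdErase] at hk'
    exact hskip.symm.cast rfl (eq_inv_of_mul_eq_one_left hk').symm (hD k).symm
  refine hw.map_vertices id fun e hmem => ?_
  by_cases hek : e = (D k).edge
  · rcases Dart.eq_or_eq_rev (d := ⟨e, true⟩) (d' := D k) hek with h | h
    · rw [← h] at hdetour ⊢
      exact hdetour
    · rw [← Z.src_true, ← Z.tgt_true, ← Dart.value_true μ, h]
      simpa using hdetour.symm
  · exact edge (Z := Z.eraseEdge _) (Finset.mem_erase.2 ⟨hek, hmem⟩)

end IsWalk

end LabeledGraph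

/-! ### Folded complexes over a presentation with involutive letters -/

/-- A presentation of `G` with one cyclic relator of length `L` and the squares of the *cone*
letters as its relators, each cone letter occurring once in the cyclic relator and every other
letter occurring as a square, together with a group `P` over `G` in which the cyclic relator
has a solution `lift` generating `P`. For the orbifold groups `P` is free. -/
structure ConePresentation (X G P : Type*) [Group G] [Group P] (L : ℕ) where
  /-- The letters of the cyclic relator. -/
  relator : ZMod L → X
  /-- The cone letters are those of order two. -/
  IsCone : X → Prop
  /-- The value of a letter in `G`. -/
  gen : X → G
  /-- The value of a letter in `P`. -/
  lift : X → P
  /-- The projection of `P` to `G`. -/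
  proj : P →* G
  one_ne_zero : (1 : ZMod L) ≠ 0
  relator_surjective : Function.Surjective relator
  exists_isCone : ∃ i, IsCone (relator i)
  eq_of_isCone : ∀ i j, IsCone (relator i) → relator j = relator i → j = i
  exists_pair : ∀ i, ¬ IsCone (relator i) → ∃ j, relator j = relator i ∧
    relator (j + 1) = relator i ∧ ∀ k, relator k = relator i → k = j ∨ k = j + 1
  closure_range_gen : Subgroup.closure (Set.range gen) = ⊤
  ker_lift_gen : (FreeGroup.lift gen).ker = Subgroup.normalClosure
    ({w | ∃ x, IsCone x ∧ w = FreeGroup.of x * FreeGroup.of x} ∪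
      {cycProd (fun i => FreeGroup.of (relator i)) 0})
  proj_lift : ∀ x, proj (lift x) = gen x
  cycProd_lift : cycProd (fun i => lift (relator i)) 0 = 1
  closure_range_lift : Subgroup.closure (Set.range lift) = ⊤

namespace ConePresentation

variable {X G P : Type*} [Group G] [Group P] {L : ℕ} {C : ConePresentation X G P L}
  {Z : LabeledGraph X} {d d' : Dart} {x : X}

lemma gen_mul_self_of_isCone (hx : C.IsCone x) : C.gen x * C.gen x = 1 := by
  have hw : FreeGroup.of x * FreeGroup.of x ∈ (FreeGroup.lift C.gen).ker := by
    rw [C.ker_lift_gen]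
    exact Subgroup.subset_normalClosure (.inl ⟨x, hx, rfl⟩)
  simpa [MonoidHom.mem_ker] using hw

lemma cycProd_gen : cycProd (fun i => C.gen (C.relator i)) 0 = 1 := by
  have hw : cycProd (fun i => FreeGroup.of (C.relator i)) 0 ∈ (FreeGroup.lift C.gen).ker := by
    rw [C.ker_lift_gen]
    exact Subgroup.subset_normalClosure (.inr rfl)
  simpa [MonoidHom.mem_ker, map_cycProd] using hw

lemma exists_hom_gen_eq {H : Type*} [Group H] (f : X → H)
    (hsq : ∀ x, C.IsCone x → f x * f x = 1) (hcyc : cycProd (fun i => f (C.relator i)) 0 = 1) :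
    ∃ φ : G →* H, ∀ x, φ (C.gen x) = f x := by
  have hsurj : Function.Surjective (FreeGroup.lift C.gen) := by
    rw [← MonoidHom.range_eq_top, FreeGroup.range_lift_eq_closure, C.closure_range_gen]
  have hker : (FreeGroup.lift C.gen).ker ≤ (FreeGroup.lift f).ker := by
    rw [C.ker_lift_gen]
    refine Subgroup.normalClosure_le_normal ?_
    rintro w (⟨x, hx, rfl⟩ | rfl)
    · simpa [MonoidHom.mem_ker] using hsq x hx
    · simpa [MonoidHom.mem_ker, map_cycProd] using hcyc
  refine ⟨(FreeGroup.lift C.gen).liftOfSurjective hsurj ⟨_, hker⟩, fun x => ?_⟩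
  simpa using (FreeGroup.lift C.gen).liftOfRightInverse_comp_apply _
    (Function.rightInverse_surjInv hsurj) ⟨_, hker⟩ (FreeGroup.of x)

variable (C)

/-- The dart `d` of `Z` reads the letter `x`. The edges of cone letters may be crossed in both
directions, as a cone letter is its own inverse. -/
def Reads (Z : LabeledGraph X) (d : Dart) (x : X) : Prop :=
  d.edge ∈ Z.edges ∧ Z.label d.edge = x ∧ (d.fwd = true ∨ C.IsCone x)

/-- A graph is folded if at most one edge reads a given letter from, or to, a given vertex. -/
def Folded (Z : LabeledGraph X) : Prop :=
  ∀ ⦃d d' : Dart⦄, d.edge ∈ Z.edges → d'.edge ∈ Z.edges → Z.src d = Z.src d' →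
    Z.label d.edge = Z.label d'.edge → (d.fwd = d'.fwd ∨ C.IsCone (Z.label d.edge)) →
    d.edge = d'.edge

/-- The sequence of darts `D` reads the relator. Consecutive darts need not match up. -/
def ReadsRelator (Z : LabeledGraph X) (D : ZMod L → Dart) : Prop :=
  ∀ i, C.Reads Z (D i) (C.relator i)

/-- `D` is the boundary of a face: a closed path reading the relator. -/
def IsFace (Z : LabeledGraph X) (D : ZMod L → Dart) : Prop :=
  C.ReadsRelator Z D ∧ ∀ i, Z.tgt (D i) = Z.src (D (i + 1))

/-- `D` reads the relator along a path that fails to close up, exactly between the positions `k`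
and `k + 1`. -/
def IsGapFace (Z : LabeledGraph X) (D : ZMod L → Dart) (k : ZMod L) : Prop :=
  C.ReadsRelator Z D ∧ (∀ i, i ≠ k → Z.tgt (D i) = Z.src (D (i + 1))) ∧
    Z.tgt (D k) ≠ Z.src (D (k + 1))

variable {C}

lemma Reads.rev (h : C.Reads Z d x) (hx : C.IsCone x) : C.Reads Z d.rev x :=
  ⟨h.1, h.2.1, .inr hx⟩

lemma Reads.fwd_eq_true (h : C.Reads Z d x) (hx : ¬ C.IsCone x) : d.fwd = true :=
  h.2.2.resolve_right hx

lemma Reads.label_eq_of_edge_eq {y : X} (h : C.Reads Z d x) (h' : C.Reads Z d' y)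
    (he : d.edge = d'.edge) : x = y := by
  rw [← h.2.1, ← h'.2.1, he]

lemma Folded.edge_and_tgt_eq (hZ : C.Folded Z) (h : C.Reads Z d x) (h' : C.Reads Z d' x)
    (hs : Z.src d = Z.src d') : d.edge = d'.edge ∧ Z.tgt d = Z.tgt d' := by
  have he : d.edge = d'.edge := by
    refine hZ h.1 h'.1 hs (h.2.1.trans h'.2.1.symm) ?_
    rw [h.2.1]
    by_cases hx : C.IsCone x
    · exact .inr hx
    · exact .inl ((h.fwd_eq_true hx).trans (h'.fwd_eq_true hx).symm)
  refine ⟨he, ?_⟩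
  rcases Dart.eq_or_eq_rev he with rfl | rfl
  · rfl
  · simpa using hs.symm

lemma Folded.edge_and_src_eq (hZ : C.Folded Z) (h : C.Reads Z d x) (h' : C.Reads Z d' x)
    (ht : Z.tgt d = Z.tgt d') : d.edge = d'.edge ∧ Z.src d = Z.src d' := by
  have he : d.edge = d'.edge := by
    refine hZ (d := d.rev) (d' := d'.rev) h.1 h'.1 (by simpa using ht)
      (h.2.1.trans h'.2.1.symm) ?_
    rw [Dart.rev_edge, h.2.1]
    by_cases hx : C.IsCone x
    · exact .inr hx
    · exact .inl (by simp [Dart.rev, h.fwd_eq_true hx, h'.fwd_eq_true hx])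
  refine ⟨he, ?_⟩
  rcases Dart.eq_or_eq_rev he with rfl | rfl
  · rfl
  · simpa using ht.symm

section Faces

variable [NeZero L] {D D' : ZMod L → Dart}

lemma IsFace.src_eq_of_src_eq (hZ : C.Folded Z) (h : C.IsFace Z D) (h' : C.IsFace Z D')
    {i : ZMod L} (hi : Z.src (D i) = Z.src (D' i)) (j : ZMod L) :
    Z.src (D j) = Z.src (D' j) := by
  refine cyclic_induction (p := fun j => Z.src (D j) = Z.src (D' j)) hi (fun i hi => ?_) j
  rw [← h.2, ← h'.2]
  exact (hZ.edge_and_tgt_eq (h.1 i) (h'.1 i) hi).2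

lemma IsGapFace.src_ne_src (hZ : C.Folded Z) {k : ZMod L} (h : C.IsGapFace Z D k)
    (h' : C.IsFace Z D') (i : ZMod L) : Z.src (D i) ≠ Z.src (D' i) := by
  intro hi
  have hiff : ∀ j, Z.src (D j) = Z.src (D' j) ↔ Z.src (D (k + 1)) = Z.src (D' (k + 1)) := by
    refine cyclic_iff_of_iff_succ_of_ne (p := fun j => Z.src (D j) = Z.src (D' j)) fun j hj => ?_
    rw [← h'.2, ← h.2.1 j hj]
    exact ⟨fun hs => (hZ.edge_and_tgt_eq (h.1 j) (h'.1 j) hs).2,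
      fun ht => (hZ.edge_and_src_eq (h.1 j) (h'.1 j) ht).2⟩
  have hk1 := (hiff i).1 hi
  refine h.2.2 ?_
  rw [hk1, ← h'.2]
  exact (hZ.edge_and_tgt_eq (h.1 k) (h'.1 k) ((hiff k).2 hk1)).2

end Faces

/-- The position `k` of `D` is free in `Φ` if its edge is crossed nowhere else by the members
of `Φ`. -/
def IsFreeAt (Φ : Finset (ZMod L → Dart)) (D : ZMod L → Dart) (k : ZMod L) : Prop :=
  ∀ D' ∈ Φ, ∀ j, (D' j).edge = (D k).edge → D' = D ∧ j = k

/-- Every nonempty subset of `Φ` has a free position, so that the faces in `Φ` can be removed one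
after the other through a free edge. -/
def Collapsible (Φ : Finset (ZMod L → Dart)) : Prop :=
  ∀ Ψ ⊆ Φ, Ψ.Nonempty → ∃ D ∈ Ψ, ∃ k, IsFreeAt Ψ D k

section Parity

variable {Φ : Finset (ZMod L → Dart)}

/-- Distinguishes the at most two crossings of one edge: for a cone letter by the direction, for
another letter by which of its two occurrences in the relator is read. -/
lemma exists_injOn_crossings (hR : ∀ D ∈ Φ, C.ReadsRelator Z D)
    (hinj : ∀ D ∈ Φ, ∀ D' ∈ Φ, ∀ i, D i = D' i → D = D') (e : ℕ) :
    ∃ σ : (ZMod L → Dart) × ZMod L → Bool,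
      Set.InjOn σ {c | c.1 ∈ Φ ∧ (c.1 c.2).edge = e} := by
  classical
  by_cases hex : ∃ c : (ZMod L → Dart) × ZMod L, c.1 ∈ Φ ∧ (c.1 c.2).edge = e
  swap
  · exact ⟨fun _ => true, fun c hc => (hex ⟨c, hc⟩).elim⟩
  obtain ⟨a, ha, rfl⟩ := hex
  have hlabel (c : (ZMod L → Dart) × ZMod L) (hc : c.1 ∈ Φ ∧ (c.1 c.2).edge = (a.1 a.2).edge) :
      C.relator c.2 = C.relator a.2 :=
    (hR _ hc.1 c.2).label_eq_of_edge_eq (hR _ ha a.2) hc.2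
  by_cases hcone : C.IsCone (C.relator a.2)
  · refine ⟨fun c => (c.1 c.2).fwd, fun b hb c hc hbc => ?_⟩
    have hpos : b.2 = c.2 := (C.eq_of_isCone _ _ hcone (hlabel b hb)).trans
      (C.eq_of_isCone _ _ hcone (hlabel c hc)).symm
    refine Prod.ext (hinj _ hb.1 _ hc.1 b.2 ?_) hpos
    exact Dart.ext (by rw [hb.2, hpos, hc.2]) (hbc.trans (by rw [hpos]))
  · obtain ⟨j, -, -, hj⟩ := C.exists_pair _ hcone
    have hfwd (c : (ZMod L → Dart) × ZMod L)
        (hc : c.1 ∈ Φ ∧ (c.1 c.2).edge = (a.1 a.2).edge) : (c.1 c.2).fwd = true :=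
      (hR _ hc.1 c.2).fwd_eq_true (by rwa [hlabel c hc])
    refine ⟨fun c => decide (c.2 = j), fun b hb c hc hbc => ?_⟩
    have hpos : b.2 = c.2 := by
      rcases hj _ (hlabel b hb) with h | h <;> rcases hj _ (hlabel c hc) with h' | h' <;>
        simp_all [C.one_ne_zero]
    refine Prod.ext (hinj _ hb.1 _ hc.1 b.2 ?_) hpos
    exact Dart.ext (by rw [hb.2, hpos, hc.2]) (by rw [hfwd b hb, hpos, hfwd c hc])

lemma exists_eq_of_edge_eq (hR : ∀ D ∈ Φ, C.ReadsRelator Z D)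
    (hinj : ∀ D ∈ Φ, ∀ D' ∈ Φ, ∀ i, D i = D' i → D = D')
    {a b c : (ZMod L → Dart) × ZMod L} (ha : a.1 ∈ Φ) (hb : b.1 ∈ Φ) (hc : c.1 ∈ Φ)
    (hba : (b.1 b.2).edge = (a.1 a.2).edge) (hca : (c.1 c.2).edge = (a.1 a.2).edge) :
    a = b ∨ a = c ∨ b = c := by
  obtain ⟨σ, hσ⟩ := exists_injOn_crossings hR hinj (a.1 a.2).edge
  have hpigeon : ∀ u v w : Bool, u = v ∨ u = w ∨ v = w := by decide
  exact (hpigeon (σ a) (σ b) (σ c)).imp (hσ ⟨ha, rfl⟩ ⟨hb, hba⟩)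
    (.imp (hσ ⟨ha, rfl⟩ ⟨hc, hca⟩) (hσ ⟨hb, hba⟩ ⟨hc, hca⟩))

lemma sum_crossings_eq_zero [NeZero L] (hR : ∀ D ∈ Φ, C.ReadsRelator Z D)
    (hinj : ∀ D ∈ Φ, ∀ D' ∈ Φ, ∀ i, D i = D' i → D = D')
    (hfree : ∀ D ∈ Φ, ∀ k, ¬ IsFreeAt Φ D k) (δ : ℕ → ZMod 2) :
    ∑ D ∈ Φ, ∑ i, (δ (Z.src (D i)) + δ (Z.tgt (D i))) = 0 := by
  have hpartner (c : (ZMod L → Dart) × ZMod L) (hc : c ∈ Φ ×ˢ Finset.univ) :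
      ∃ c' ∈ Φ ×ˢ Finset.univ, (c'.1 c'.2).edge = (c.1 c.2).edge ∧ c' ≠ c := by
    have hc' := hfree c.1 (Finset.mem_product.1 hc).1 c.2
    simp only [IsFreeAt, not_forall] at hc'
    obtain ⟨D, hD, j, he, hne⟩ := hc'
    exact ⟨(D, j), by simp [hD], he, fun h => hne (Prod.ext_iff.1 h)⟩
  choose! τ hτ hτ_edge hτ_ne using hpartner
  have hends (d : Dart) :
      δ (Z.src d) + δ (Z.tgt d) = δ (Z.source d.edge) + δ (Z.target d.edge) := by
    obtain ⟨e, _ | _⟩ := d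
    · exact add_comm _ _
    · rfl
  simp only [hends]
  rw [← Finset.sum_product' Φ Finset.univ
    fun D i => δ (Z.source (D i).edge) + δ (Z.target (D i).edge)]
  refine Finset.sum_involution (fun c _ => τ c) (fun c hc => ?_) (fun c hc _ => hτ_ne c hc) hτ
    fun c hc => ?_
  · rw [hτ_edge c hc]
    exact CharTwo.add_self_eq_zero _
  · have hmem {c : (ZMod L → Dart) × ZMod L} (hc : c ∈ Φ ×ˢ Finset.univ) : c.1 ∈ Φ :=
      (Finset.mem_product.1 hc).1
    have hττ := hτ _ (hτ c hc)
    rcases exists_eq_of_edge_eq hR hinj (hmem hc) (hmem (hτ c hc)) (hmem hττ) (hτ_edge c hc)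
      ((hτ_edge _ (hτ c hc)).trans (hτ_edge c hc)) with h | h | h
    · exact (hτ_ne c hc h.symm).elim
    · exact h.symm
    · exact (hτ_ne _ (hτ c hc) h.symm).elim

lemma sum_src_add_tgt [NeZero L] (δ : ℕ → ZMod 2) (D : ZMod L → Dart) :
    ∑ i, (δ (Z.src (D i)) + δ (Z.tgt (D i))) =
      ∑ i, (δ (Z.src (D (i + 1))) + δ (Z.tgt (D i))) := by
  rw [Finset.sum_add_distrib, Finset.sum_add_distrib]
  congr 1
  exact (Equiv.sum_comp (Equiv.addRight (1 : ZMod L)) fun i => δ (Z.src (D i))).symm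

/-- Counting modulo two how often the edges of `Φ` end at one of the two ends of the gap gives an
even number if every edge is crossed twice, and an odd number since only the gap contributes. -/
lemma exists_isFreeAt_of_isGapFace [NeZero L] (hR : ∀ D ∈ Φ, C.ReadsRelator Z D)
    (hinj : ∀ D ∈ Φ, ∀ D' ∈ Φ, ∀ i, D i = D' i → D = D')
    {D : ZMod L → Dart} {k : ZMod L} (hD : D ∈ Φ) (hgap : C.IsGapFace Z D k)
    (hface : ∀ D' ∈ Φ, D' ≠ D → C.IsFace Z D') : ∃ D' ∈ Φ, ∃ j, IsFreeAt Φ D' j := by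
  by_contra! hfree
  let δ : ℕ → ZMod 2 := fun v => if v = Z.tgt (D k) then 1 else 0
  have hsum : ∑ D ∈ Φ, ∑ i, (δ (Z.src (D i)) + δ (Z.tgt (D i))) = 1 := by
    rw [Finset.sum_eq_single_of_mem D hD, sum_src_add_tgt,
      Finset.sum_eq_single_of_mem k (Finset.mem_univ _)]
    · simp [δ, hgap.2.2.symm]
    · intro i _ hi
      rw [hgap.2.1 i hi]
      exact CharTwo.add_self_eq_zero _
    · intro D' hD' hne
      rw [sum_src_add_tgt]
      exact Finset.sum_eq_zero fun i _ => by
        rw [(hface D' hD' hne).2 i]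
        exact CharTwo.add_self_eq_zero _
  rw [sum_crossings_eq_zero hR hinj hfree] at hsum
  exact absurd hsum (by decide)

end Parity

section Connectivity

variable (C)

/-- The labeling of the edges of `Z` by the values of their letters in `G`. -/
abbrev holonomy (Z : LabeledGraph X) : ℕ → G := fun e => C.gen (Z.label e)

/-- Some walk joins the base vertex to `v`. -/
def Reachable (Z : LabeledGraph X) (v : ℕ) : Prop := ∃ g, Z.IsWalk (C.holonomy Z) Z.base g v

/-- Every edge can be reached from the base vertex. -/
def Connected (Z : LabeledGraph X) : Prop := ∀ e ∈ Z.edges, C.Reachable Z (Z.source e)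

/-- The loops at the base vertex realize all of `G`. -/
def LoopsSurject (Z : LabeledGraph X) : Prop :=
  ∀ g, Z.IsWalk (C.holonomy Z) Z.base g Z.base

variable {C}

lemma Reachable.tgt (h : C.Reachable Z (Z.src d)) (hd : d.edge ∈ Z.edges) :
    C.Reachable Z (Z.tgt d) :=
  let ⟨_, hg⟩ := h
  ⟨_, hg.append (.dart hd)⟩

lemma Connected.reachable_src (h : C.Connected Z) (hd : d.edge ∈ Z.edges) :
    C.Reachable Z (Z.src d) := by
  obtain ⟨e, _ | _⟩ := d
  · exact Reachable.tgt (d := ⟨e, true⟩) (h e hd) hd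
  · exact h e hd

end Connectivity

section ClosedSubcomplex

variable {Φ : Finset (ZMod L → Dart)}

variable (C) in
/-- A set of faces of a folded graph, distinct at each position of the relator, that has no free
position. -/
structure IsClosedSubcomplex (Z : LabeledGraph X) (Φ : Finset (ZMod L → Dart)) : Prop where
  folded : C.Folded Z
  isFace : ∀ D ∈ Φ, C.IsFace Z D
  eq_of_src_eq : ∀ D ∈ Φ, ∀ D' ∈ Φ, ∀ i, Z.src (D i) = Z.src (D' i) → D = D'
  not_isFreeAt : ∀ D ∈ Φ, ∀ k, ¬ IsFreeAt Φ D k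

/-- The vertices on the faces in `Φ`. -/
def corners (Z : LabeledGraph X) (Φ : Finset (ZMod L → Dart)) : Set ℕ :=
  {u | ∃ D ∈ Φ, ∃ i, Z.src (D i) = u}

namespace IsClosedSubcomplex

lemma exists_other_crossing (h : C.IsClosedSubcomplex Z Φ) {D : ZMod L → Dart} (hD : D ∈ Φ)
    (i : ZMod L) : ∃ D' ∈ Φ, ∃ j, (D' j).edge = (D i).edge ∧
      C.relator j = C.relator i ∧ (D' j = D i → j ≠ i) := by
  have hfree := h.not_isFreeAt D hD i
  simp only [IsFreeAt, not_forall] at hfree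
  obtain ⟨D', hD', j, he, hne⟩ := hfree
  refine ⟨D', hD', j, he, ((h.isFace D' hD').1 j).label_eq_of_edge_eq ((h.isFace D hD).1 i) he, ?_⟩
  rintro hd rfl
  exact hne ⟨h.eq_of_src_eq D' hD' D hD j (by rw [hd]), rfl⟩

lemma exists_src_eq_succ (h : C.IsClosedSubcomplex Z Φ) {D : ZMod L → Dart} (hD : D ∈ Φ)
    (i : ZMod L) : ∃ D' ∈ Φ, Z.src (D' (i + 1)) = Z.src (D i) := by
  by_cases hcone : C.IsCone (C.relator i)
  · obtain ⟨D', hD', j, he, hlabel, hne⟩ := h.exists_other_crossing hD i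
    obtain rfl : j = i := C.eq_of_isCone _ _ hcone hlabel
    have hrev : D' j = (D j).rev :=
      (Dart.eq_or_eq_rev he).resolve_left fun hd => hne hd rfl
    exact ⟨D', hD', by rw [← (h.isFace D' hD').2, hrev, Z.tgt_rev]⟩
  · obtain ⟨j₀, hj₀, -, hpair⟩ := C.exists_pair i hcone
    have hpartner {m : ZMod L} (hm : C.relator m = C.relator i) :
        ∃ D' ∈ Φ, ∃ j, (j = j₀ ∨ j = j₀ + 1) ∧ D' j = D m ∧ j ≠ m := by
      obtain ⟨D', hD', j, he, hlabel, hne⟩ := h.exists_other_crossing hD m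
      have hd : D' j = D m := Dart.ext he <|
        (((h.isFace D' hD').1 j).fwd_eq_true (by rwa [hlabel, hm])).trans
          (((h.isFace D hD).1 m).fwd_eq_true (by rwa [hm])).symm
      exact ⟨D', hD', j, hpair j (hlabel.trans hm), hd, hne hd⟩
    rcases hpair i rfl with rfl | rfl
    · obtain ⟨D', hD', j, hj, hd, hne⟩ := hpartner rfl
      obtain rfl := hj.resolve_left hne
      exact ⟨D', hD', by rw [hd]⟩
    · obtain ⟨D', hD', j, hj, hd, hne⟩ := hpartner hj₀
      obtain rfl := hj.resolve_left hne
      exact ⟨D', hD', by rw [← (h.isFace D' hD').2, hd, (h.isFace D hD).2]⟩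

variable [NeZero L]

lemma exists_src_eq (h : C.IsClosedSubcomplex Z Φ) {u : ℕ} (hu : u ∈ corners Z Φ) (i : ZMod L) :
    ∃ D ∈ Φ, Z.src (D i) = u := by
  obtain ⟨D, hD, j, hj⟩ := hu
  refine cyclic_induction (p := fun i => ∃ D ∈ Φ, Z.src (D i) = u) ⟨D, hD, hj⟩ ?_ i
  rintro j ⟨D, hD, rfl⟩
  exact h.exists_src_eq_succ hD j

/-- Each position of the relator identifies the faces in `Φ` with their vertices. -/
noncomputable def facesEquivCorners (h : C.IsClosedSubcomplex Z Φ) (i : ZMod L) :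
    Φ ≃ corners Z Φ :=
  Equiv.ofBijective (fun D => ⟨Z.src (D.1 i), D.1, D.2, i, rfl⟩)
    ⟨fun D D' hs => Subtype.ext (h.eq_of_src_eq _ D.2 _ D'.2 i (congrArg Subtype.val hs)),
      fun u => (h.exists_src_eq u.2 i).elim fun D hD => ⟨⟨D, hD.1⟩, Subtype.ext hD.2⟩⟩

/-- The permutation of the vertices of a closed subcomplex that follows the edges labeled `x`
backwards. -/
noncomputable def letterPerm (h : C.IsClosedSubcomplex Z Φ) (x : X) :
    Equiv.Perm (corners Z Φ) :=
  (h.facesEquivCorners (Function.surjInv C.relator_surjective x + 1)).symm.trans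
    (h.facesEquivCorners (Function.surjInv C.relator_surjective x))

lemma exists_adjacent (h : C.IsClosedSubcomplex Z Φ) (hd : C.Reads Z d x)
    (hmem : Z.src d ∈ corners Z Φ ∨ Z.tgt d ∈ corners Z Φ) {i : ZMod L} (hi : C.relator i = x) :
    ∃ D ∈ Φ, Z.src (D i) = Z.src d ∧ Z.src (D (i + 1)) = Z.tgt d := by
  subst hi
  rcases hmem with hs | ht
  · obtain ⟨D, hD, hDi⟩ := h.exists_src_eq hs i
    refine ⟨D, hD, hDi, ?_⟩
    rw [← (h.isFace D hD).2]
    exact (h.folded.edge_and_tgt_eq ((h.isFace D hD).1 i) hd hDi).2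
  · obtain ⟨D, hD, hDi⟩ := h.exists_src_eq ht (i + 1)
    refine ⟨D, hD, ?_, hDi⟩
    rw [← (h.isFace D hD).2] at hDi
    exact (h.folded.edge_and_src_eq ((h.isFace D hD).1 i) hd hDi).2

lemma src_mem_corners_iff (h : C.IsClosedSubcomplex Z Φ) (hd : C.Reads Z d x) :
    Z.src d ∈ corners Z Φ ↔ Z.tgt d ∈ corners Z Φ := by
  obtain ⟨i, hi⟩ := C.relator_surjective x
  constructor <;> intro hmem
  · obtain ⟨D, hD, -, ht⟩ := h.exists_adjacent hd (.inl hmem) hi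
    exact ⟨D, hD, _, ht⟩
  · obtain ⟨D, hD, hs, -⟩ := h.exists_adjacent hd (.inr hmem) hi
    exact ⟨D, hD, _, hs⟩

lemma letterPerm_tgt (h : C.IsClosedSubcomplex Z Φ) (hd : C.Reads Z d x)
    (hs : Z.src d ∈ corners Z Φ) (ht : Z.tgt d ∈ corners Z Φ) :
    h.letterPerm x ⟨Z.tgt d, ht⟩ = ⟨Z.src d, hs⟩ := by
  obtain ⟨D, hD, hDs, hDt⟩ := h.exists_adjacent hd (.inl hs)
    (Function.surjInv_eq C.relator_surjective x)
  have htgt : (⟨Z.tgt d, ht⟩ : corners Z Φ) = h.facesEquivCorners _ ⟨D, hD⟩ :=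
    Subtype.ext hDt.symm
  rw [letterPerm, Equiv.trans_apply, htgt, Equiv.symm_apply_apply]
  exact Subtype.ext hDs

lemma letterPerm_relator (h : C.IsClosedSubcomplex Z Φ) (i : ZMod L) (D : Φ) :
    h.letterPerm (C.relator i) (h.facesEquivCorners (i + 1) D) = h.facesEquivCorners i D := by
  have hD := h.isFace D.1 D.2
  have htgt : h.facesEquivCorners (i + 1) D = ⟨Z.tgt (D.1 i), D.1, D.2, i + 1, (hD.2 i).symm⟩ :=
    Subtype.ext (hD.2 i).symm
  rw [htgt]
  exact h.letterPerm_tgt (hD.1 i) ⟨D.1, D.2, i, rfl⟩ _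

lemma letterPerm_mul_self (h : C.IsClosedSubcomplex Z Φ) (hx : C.IsCone x) :
    h.letterPerm x * h.letterPerm x = 1 := by
  obtain ⟨i, rfl⟩ := C.relator_surjective x
  ext1 u
  obtain ⟨D, rfl⟩ := (h.facesEquivCorners (i + 1)).surjective u
  have hD := h.isFace D.1 D.2
  rw [Equiv.Perm.mul_apply, letterPerm_relator, Equiv.Perm.one_apply]
  have hback := h.letterPerm_tgt ((hD.1 i).rev hx)
    (by rw [Z.src_rev, hD.2]; exact ⟨D.1, D.2, i + 1, rfl⟩)
    (by rw [Z.tgt_rev]; exact ⟨D.1, D.2, i, rfl⟩)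
  simp only [Z.src_rev, Z.tgt_rev, hD.2 i] at hback
  exact hback

lemma cycProd_letterPerm (h : C.IsClosedSubcomplex Z Φ) :
    cycProd (fun i => h.letterPerm (C.relator i)) 0 = 1 := by
  ext1 u
  obtain ⟨D, rfl⟩ := (h.facesEquivCorners 0).surjective u
  have hprod (n : ℕ) : ((List.range n).map fun j : ℕ => h.letterPerm (C.relator (0 + j))).prod
      (h.facesEquivCorners n D) = h.facesEquivCorners 0 D := by
    induction n with
    | zero => simp
    | succ n ih =>
      rw [List.prod_range_succ, Equiv.Perm.mul_apply, zero_add, Nat.cast_succ,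
        letterPerm_relator, ih]
  simpa [cycProd] using hprod L

lemma exists_monodromy (h : C.IsClosedSubcomplex Z Φ) :
    ∃ φ : G →* Equiv.Perm (corners Z Φ), ∀ x, φ (C.gen x) = h.letterPerm x :=
  C.exists_hom_gen_eq _ (fun _ => h.letterPerm_mul_self) h.cycProd_letterPerm

lemma exists_monodromy_eq_of_isWalk (h : C.IsClosedSubcomplex Z Φ)
    {φ : G →* Equiv.Perm (corners Z Φ)} (hφ : ∀ x, φ (C.gen x) = h.letterPerm x) {a b : ℕ} {g : G}
    (hw : Z.IsWalk (C.holonomy Z) a g b) (hb : b ∈ corners Z Φ) :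
    ∃ ha : a ∈ corners Z Φ, φ g ⟨b, hb⟩ = ⟨a, ha⟩ := by
  induction hw with
  | nil a => exact ⟨hb, by simp⟩
  | cons d g c hd _ ih =>
    obtain ⟨ha, hg⟩ := ih hb
    obtain ⟨e, b⟩ := d
    have he : C.Reads Z ⟨e, true⟩ (Z.label e) := ⟨hd, rfl, .inl rfl⟩
    cases b
    · have hsrc := (h.src_mem_corners_iff he).1 ha
      refine ⟨hsrc, ?_⟩
      rw [map_mul, Equiv.Perm.mul_apply, hg, Dart.value_false, map_inv, hφ,
        Equiv.Perm.inv_eq_iff_eq]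
      exact (h.letterPerm_tgt he ha hsrc).symm
    · have hsrc := (h.src_mem_corners_iff he).2 ha
      refine ⟨hsrc, ?_⟩
      rw [map_mul, Equiv.Perm.mul_apply, hg, Dart.value_true, hφ]
      exact h.letterPerm_tgt he hsrc ha

/-- A closed subcomplex covers the presentation complex, and surjectivity on loops makes the
covering one-sheeted. -/
lemma src_eq_base (h : C.IsClosedSubcomplex Z Φ) (hconn : C.Connected Z) (hsurj : C.LoopsSurject Z)
    {D : ZMod L → Dart} (hD : D ∈ Φ) (i : ZMod L) : Z.src (D i) = Z.base := by
  obtain ⟨φ, hφ⟩ := h.exists_monodromy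
  obtain ⟨g, hg⟩ := hconn.reachable_src ((h.isFace D hD).1 i).1
  obtain ⟨hbase, hφg⟩ := h.exists_monodromy_eq_of_isWalk hφ hg ⟨D, hD, i, rfl⟩
  obtain ⟨_, hφg'⟩ := h.exists_monodromy_eq_of_isWalk hφ (hsurj g) hbase
  exact congrArg Subtype.val ((φ g).injective (hφg.trans hφg'.symm))

/-- In a one-sheeted cover the edge of a cone letter would be crossed only once. -/
lemma eq_empty (h : C.IsClosedSubcomplex Z Φ) (hconn : C.Connected Z)
    (hsurj : C.LoopsSurject Z) : Φ = ∅ := by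
  refine Finset.eq_empty_of_forall_notMem fun D hD => ?_
  obtain ⟨i, hi⟩ := C.exists_isCone
  refine h.not_isFreeAt D hD i fun D' hD' j he => ⟨h.eq_of_src_eq D' hD' D hD i ?_, ?_⟩
  · rw [h.src_eq_base hconn hsurj hD, h.src_eq_base hconn hsurj hD']
  · exact C.eq_of_isCone _ _ hi
      (((h.isFace D' hD').1 j).label_eq_of_edge_eq ((h.isFace D hD).1 i) he)

end IsClosedSubcomplex

end ClosedSubcomplex

variable (C) in
/-- A folded connected graph carrying distinct faces `Φ`, whose loops generate `G`. -/
structure IsFoldedComplex (Z : LabeledGraph X) (Φ : Finset (ZMod L → Dart)) : Prop where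
  folded : C.Folded Z
  isFace : ∀ D ∈ Φ, C.IsFace Z D
  eq_of_src_eq : ∀ D ∈ Φ, ∀ D' ∈ Φ, ∀ i, Z.src (D i) = Z.src (D' i) → D = D'
  connected : C.Connected Z
  loopsSurject : C.LoopsSurject Z

lemma IsFoldedComplex.collapsible_insert [NeZero L] {Φ : Finset (ZMod L → Dart)}
    (hZ : C.IsFoldedComplex Z Φ) {D : ZMod L → Dart} {k : ZMod L} (hgap : C.IsGapFace Z D k) :
    Collapsible (insert D Φ) := by
  intro Ψ hΨ hne
  have hmem {D'} (hD' : D' ∈ Ψ) (h : D' ≠ D) : D' ∈ Φ :=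
    (Finset.mem_insert.1 (hΨ hD')).resolve_left h
  by_cases hD : D ∈ Ψ
  · refine exists_isFreeAt_of_isGapFace (C := C) (fun D' hD' => ?_)
      (fun D₁ h₁ D₂ h₂ i hi => ?_) hD hgap fun D' hD' hne => hZ.isFace D' (hmem hD' hne)
    · by_cases h : D' = D
      · exact h ▸ hgap.1
      · exact (hZ.isFace D' (hmem hD' h)).1
    · by_cases h₁D : D₁ = D <;> by_cases h₂D : D₂ = D
      · rw [h₁D, h₂D]
      · subst h₁D
        exact (hgap.src_ne_src hZ.folded (hZ.isFace D₂ (hmem h₂ h₂D)) i (by rw [hi])).elim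
      · subst h₂D
        exact (hgap.src_ne_src hZ.folded (hZ.isFace D₁ (hmem h₁ h₁D)) i (by rw [hi])).elim
      · exact hZ.eq_of_src_eq _ (hmem h₁ h₁D) _ (hmem h₂ h₂D) i (by rw [hi])
  · have hsub {D'} (hD' : D' ∈ Ψ) : D' ∈ Φ := hmem hD' fun h => hD (h ▸ hD')
    by_contra! hfree
    have hclosed : C.IsClosedSubcomplex Z Ψ :=
      ⟨hZ.folded, fun D' hD' => hZ.isFace D' (hsub hD'),
        fun D₁ h₁ D₂ h₂ => hZ.eq_of_src_eq D₁ (hsub h₁) D₂ (hsub h₂), hfree⟩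
    exact hne.ne_empty (hclosed.eq_empty hZ.connected hZ.loopsSurject)

section Reductions

variable {Y Z' : LabeledGraph X} {Φ Ψ Ψ' : Finset (ZMod L → Dart)} {f f' : ℕ → ℕ} {u v w : ℕ}

variable (C) in
/-- Some dart of `Z` from `u` to `w` reads `x`. -/
def Step (Z : LabeledGraph X) (u : ℕ) (x : X) (w : ℕ) : Prop :=
  ∃ d, C.Reads Z d x ∧ Z.src d = u ∧ Z.tgt d = w

variable (C) in
/-- `f` maps the vertices of `Y` to those of `Z` in such a way that all edges can be followed. -/
def IsMorphism (f : ℕ → ℕ) (Y Z : LabeledGraph X) : Prop :=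
  ∀ e ∈ Y.edges, C.Step Z (f (Y.source e)) (Y.label e) (f (Y.target e))

variable (C) in
/-- A labeling `lam` of the edges of `Z` in `P` that lifts the labeling in `G`, is trivial around
the faces in `Φ`, and takes all values on loops at the base vertex. -/
structure IsLift (Z : LabeledGraph X) (Φ : Finset (ZMod L → Dart)) (lam : ℕ → P) : Prop where
  proj_eq : ∀ e ∈ Z.edges, C.proj (lam e) = C.holonomy Z e
  cycProd_eq_one : ∀ D ∈ Φ, cycProd (fun i => (D i).value lam) 0 = 1
  isWalk : ∀ g, Z.IsWalk lam Z.base g Z.base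

variable (C) in
/-- The complex with graph `Z` and faces `Φ` has a lift to `P`. -/
def Liftable (Z : LabeledGraph X) (Φ : Finset (ZMod L → Dart)) : Prop := ∃ lam, C.IsLift Z Φ lam

variable (C) in
/-- A map of complexes along which lifts can be pulled back. -/
structure IsReduction (f : ℕ → ℕ) (Y : LabeledGraph X) (Φ : Finset (ZMod L → Dart))
    (Z : LabeledGraph X) (Ψ : Finset (ZMod L → Dart)) : Prop where
  map_base : f Y.base = Z.base
  isMorphism : C.IsMorphism f Y Z
  liftable : C.Liftable Z Ψ → C.Liftable Y Φ

lemma Step.symm (h : C.Step Z u x w) (hx : C.IsCone x) : C.Step Z w x u := by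
  obtain ⟨d, hd, rfl, rfl⟩ := h
  exact ⟨d.rev, hd.rev hx, by simp, by simp⟩

lemma Step.of_edge {e : ℕ} (he : e ∈ Z.edges) :
    C.Step Z (Z.source e) (Z.label e) (Z.target e) :=
  ⟨⟨e, true⟩, ⟨he, rfl, .inl rfl⟩, rfl, rfl⟩

lemma gen_inv_of_isCone (hx : C.IsCone x) : (C.gen x)⁻¹ = C.gen x :=
  inv_eq_of_mul_eq_one_left (gen_mul_self_of_isCone hx)

lemma Reads.value_holonomy (h : C.Reads Z d x) : d.value (C.holonomy Z) = C.gen x := by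
  obtain ⟨e, _ | _⟩ := d <;> obtain ⟨-, rfl, hx⟩ := h
  · exact gen_inv_of_isCone (hx.resolve_left (by simp))
  · rfl

lemma Reads.step_edge {q : ℕ → ℕ} (h : C.Reads Y d x)
    (hs : C.Step Z (q (Y.src d)) x (q (Y.tgt d))) :
    C.Step Z (q (Y.source d.edge)) (Y.label d.edge) (q (Y.target d.edge)) := by
  obtain ⟨e, _ | _⟩ := d <;> obtain ⟨-, rfl, hx⟩ := h
  · exact hs.symm (hx.resolve_left (by simp))
  · exact hs

lemma Reads.proj_value_eq_iff {lam : ℕ → P} (h : C.Reads Z d x) :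
    C.proj (d.value lam) = C.gen x ↔ C.proj (lam d.edge) = C.holonomy Z d.edge := by
  rw [← h.value_holonomy, d.map_value_eq_iff]

lemma Step.isWalk (h : C.Step Z u x w) : Z.IsWalk (C.holonomy Z) u (C.gen x) w := by
  obtain ⟨d, hd, hs, ht⟩ := h
  exact (LabeledGraph.IsWalk.dart hd.1).cast hs hd.value_holonomy ht

namespace IsMorphism

lemma step (hf : C.IsMorphism f Y Z) (h : C.Step Y u x w) : C.Step Z (f u) x (f w) := by
  obtain ⟨⟨e, b⟩, ⟨he, rfl, hb⟩, rfl, rfl⟩ := h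
  cases b
  · exact (hf e he).symm (hb.resolve_left (by simp))
  · exact hf e he

lemma isWalk (hf : C.IsMorphism f Y Z) {g : G} (h : Y.IsWalk (C.holonomy Y) u g w) :
    Z.IsWalk (C.holonomy Z) (f u) g (f w) :=
  h.map_vertices f fun e he => (hf e he).isWalk

lemma reachable (hf : C.IsMorphism f Y Z) (hbase : f Y.base = Z.base) (hv : C.Reachable Y v) :
    C.Reachable Z (f v) :=
  let ⟨g, hg⟩ := hv
  ⟨g, (hf.isWalk hg).cast hbase rfl rfl⟩

lemma loopsSurject (hf : C.IsMorphism f Y Z) (hbase : f Y.base = Z.base)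
    (hY : C.LoopsSurject Y) : C.LoopsSurject Z :=
  fun g => (hf.isWalk (hY g)).cast hbase rfl hbase

lemma id (Z : LabeledGraph X) : C.IsMorphism id Z Z := fun _ he => .of_edge he

lemma mapVertices (Z : LabeledGraph X) (q : ℕ → ℕ) : C.IsMorphism q Z (Z.mapVertices q) :=
  fun _ he => Step.of_edge (Z := Z.mapVertices q) he

end IsMorphism

namespace IsReduction

lemma reachable (h : C.IsReduction f Y Φ Z Ψ) (hv : C.Reachable Y v) : C.Reachable Z (f v) :=
  h.isMorphism.reachable h.map_base hv

lemma trans (h : C.IsReduction f Y Φ Z Ψ) (h' : C.IsReduction f' Z Ψ Z' Ψ') :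
    C.IsReduction (f' ∘ f) Y Φ Z' Ψ' where
  map_base := by simp [h.map_base, h'.map_base]
  isMorphism e he := h'.isMorphism.step (h.isMorphism e he)
  liftable hZ' := h.liftable (h'.liftable hZ')

lemma refl (Z : LabeledGraph X) (Ψ : Finset (ZMod L → Dart)) :
    C.IsReduction id Z Ψ Z Ψ :=
  ⟨rfl, .id Z, id⟩

end IsReduction

variable {D : ZMod L → Dart} {k : ZMod L}

lemma ReadsRelator.cycProd_holonomy (h : C.ReadsRelator Z D) :
    cycProd (fun i => (D i).value (C.holonomy Z)) 0 = 1 := by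
  simp only [(h _).value_holonomy, cycProd_gen]

/-- The identification of the two ends of the gap of `D`. -/
def glueGap (Z : LabeledGraph X) (D : ZMod L → Dart) (k : ZMod L) (v : ℕ) : ℕ :=
  if v = Z.tgt (D k) then Z.src (D (k + 1)) else v

lemma glueGap_tgt (Z : LabeledGraph X) (D : ZMod L → Dart) (k : ZMod L) :
    glueGap Z D k (Z.tgt (D k)) = glueGap Z D k (Z.src (D (k + 1))) := by
  simp [glueGap]

lemma IsGapFace.isFace_mapVertices_glueGap (h : C.IsGapFace Z D k) :
    C.IsFace (Z.mapVertices (glueGap Z D k)) D := by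
  refine ⟨fun i => h.1 i, fun i => ?_⟩
  rw [Z.src_mapVertices, Z.tgt_mapVertices]
  by_cases hi : i = k
  · subst hi
    exact glueGap_tgt Z D i
  · rw [h.2.1 i hi]

lemma IsFace.mapVertices (h : C.IsFace Z D) (q : ℕ → ℕ) : C.IsFace (Z.mapVertices q) D :=
  ⟨fun i => h.1 i, fun i => by rw [Z.src_mapVertices, Z.tgt_mapVertices, h.2]⟩

variable [NeZero L]

/-- A lift of the glued complex is trivial on the path from one end of the gap to the other, so
nothing is lost by pulling the two ends apart. -/
lemma IsGapFace.isReduction_glueGap (h : C.IsGapFace Z D k) (Φ : Finset (ZMod L → Dart)) :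
    C.IsReduction (glueGap Z D k) Z Φ (Z.mapVertices (glueGap Z D k)) (insert D Φ) where
  map_base := rfl
  isMorphism := .mapVertices Z _
  liftable := by
    rintro ⟨lam, hlam⟩
    refine ⟨lam, hlam.proj_eq, fun D' hD' => hlam.cycProd_eq_one D' (Finset.mem_insert_of_mem hD'),
      fun g => .of_mapVertices (fun v => ?_) (hlam.isWalk g)⟩
    by_cases hv : v = Z.tgt (D k)
    · have hloop := (LabeledGraph.IsWalk.around_skipping (μ := lam) (fun i _ => (h.1 i).1)
        h.2.1).append (.dart (h.1 k).1)
      rw [← cycProd_succ_eq_cycProdErase_mul, cycProd_eq_one_of_eq_one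
        (hlam.cycProd_eq_one D (Finset.mem_insert_self _ _))] at hloop
      exact hloop.symm.cast hv.symm inv_one (by simp [glueGap, hv])
    · simpa [glueGap, hv] using LabeledGraph.IsWalk.nil v

lemma proj_cycProdErase {lam : ℕ → P} (hD : C.ReadsRelator Z D)
    (hlam : ∀ i, i ≠ k → C.proj (lam (D i).edge) = C.holonomy Z (D i).edge) :
    C.proj (cycProdErase (fun i => (D i).value lam) k) = (C.gen (C.relator k))⁻¹ := by
  have hgen := cycProd_eq_one_of_eq_one (C.cycProd_gen) k
  rw [cycProd_eq_mul_cycProdErase] at hgen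
  rw [← eq_inv_of_mul_eq_one_right hgen, map_cycProdErase]
  exact cycProdErase_congr fun i hi => (hD i).proj_value_eq_iff.2 (hlam i hi)

/-- The value of the free edge is forced by the face, and exists since the relator holds in `G`. -/
lemma liftable_of_liftable_eraseEdge (hD : C.ReadsRelator Z D) (hfree : IsFreeAt Φ D k)
    (hmem : D ∈ Φ) (h : C.Liftable (Z.eraseEdge (D k).edge) (Φ.erase D)) : C.Liftable Z Φ := by
  obtain ⟨lam, hlam⟩ := h
  have hne (i : ZMod L) (hi : i ≠ k) : (D i).edge ≠ (D k).edge := fun h => hi (hfree D hmem i h).2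
  have hproj (e : ℕ) (he : e ∈ Z.edges) (hek : e ≠ (D k).edge) :
      C.proj (lam e) = C.holonomy Z e := hlam.proj_eq e (Finset.mem_erase.2 ⟨hek, he⟩)
  set ρ := cycProdErase (fun i => (D i).value lam) k with hρ
  let lam' := Function.update lam (D k).edge (if (D k).fwd then ρ⁻¹ else ρ⁻¹⁻¹)
  have hother {d : Dart} (hd : d.edge ≠ (D k).edge) : d.value lam' = d.value lam :=
    Dart.value_congr (Function.update_of_ne hd _ _)
  have hself : (D k).value lam' = ρ⁻¹ := Dart.value_update_self _ _
  refine ⟨lam', fun e he => ?_, fun D' hD' => ?_, fun g => (hlam.isWalk g).map_vertices id ?_⟩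
  · by_cases hek : e = (D k).edge
    · subst hek
      rw [← (hD k).proj_value_eq_iff, hself, map_inv,
        proj_cycProdErase hD fun i hi => hproj _ (hD i).1 (hne i hi), inv_inv]
    · exact (congrArg C.proj (Function.update_of_ne hek _ _)).trans (hproj e he hek)
  · by_cases hDD' : D' = D
    · subst hDD'
      refine cycProd_eq_one_of_eq_one (k := k) ?_ 0
      rw [cycProd_eq_mul_cycProdErase, hself, cycProdErase_congr fun i hi => hother (hne i hi),
        inv_mul_cancel]
    · rw [← hlam.cycProd_eq_one D' (Finset.mem_erase.2 ⟨hDD', hD'⟩)]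
      congr 1
      funext i
      exact hother fun h => hDD' (hfree D' hD' i h).1
  · intro e he
    obtain ⟨hek, he⟩ := Finset.mem_erase.1 he
    exact (LabeledGraph.IsWalk.edge he).cast rfl (Function.update_of_ne hek _ _) rfl

end Reductions

section Fold

variable {Y : LabeledGraph X}

variable (C) in
/-- Two darts on different edges that violate foldedness. -/
structure IsFoldPair (Y : LabeledGraph X) (d d' : Dart) : Prop where
  mem : d.edge ∈ Y.edges
  mem' : d'.edge ∈ Y.edges
  src_eq : Y.src d = Y.src d'
  label_eq : Y.label d.edge = Y.label d'.edge
  fwd_eq_or_isCone : d.fwd = d'.fwd ∨ C.IsCone (Y.label d.edge)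
  edge_ne : d.edge ≠ d'.edge

/-- The identification of the terminal vertices of `d` and `d'`. -/
def foldMap (Y : LabeledGraph X) (d d' : Dart) (v : ℕ) : ℕ :=
  if v = Y.tgt d' then Y.tgt d else v

/-- The graph obtained by folding the dart `d'` onto the dart `d`. -/
def foldDarts (Y : LabeledGraph X) (d d' : Dart) : LabeledGraph X :=
  (Y.mapVertices (foldMap Y d d')).eraseEdge d'.edge

lemma foldMap_tgt (Y : LabeledGraph X) (d d' : Dart) :
    foldMap Y d d' (Y.tgt d) = foldMap Y d d' (Y.tgt d') := by
  simp [foldMap]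

lemma exists_isFoldPair (h : ¬ C.Folded Y) : ∃ d d', C.IsFoldPair Y d d' := by
  simp only [Folded, not_forall] at h
  obtain ⟨d, d', hd, hd', hsrc, hlabel, hdir, hne⟩ := h
  exact ⟨d, d', hd, hd', hsrc, hlabel, hdir, hne⟩

namespace IsFoldPair

lemma value_holonomy (h : C.IsFoldPair Y d d') :
    d.value (C.holonomy Y) = d'.value (C.holonomy Y) := by
  rcases h.fwd_eq_or_isCone with hdir | hcone
  · simp only [Dart.value, hdir, holonomy, h.label_eq]
  · rw [Reads.value_holonomy ⟨h.mem, rfl, .inr hcone⟩,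
      Reads.value_holonomy ⟨h.mem', h.label_eq.symm, .inr hcone⟩]

lemma isMorphism (h : C.IsFoldPair Y d d') :
    C.IsMorphism (foldMap Y d d') Y (foldDarts Y d d') := by
  have hmem : d.edge ∈ (foldDarts Y d d').edges := Finset.mem_erase.2 ⟨h.edge_ne, h.mem⟩
  have hsrc := congrArg (foldMap Y d d') h.src_eq
  have htgt := foldMap_tgt Y d d'
  intro e he
  by_cases hed : e = d'.edge
  · subst hed
    rcases h.fwd_eq_or_isCone with hdir | hcone
    · have hlabel := h.label_eq
      obtain ⟨e, b⟩ := d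
      obtain ⟨e', b'⟩ := d'
      obtain rfl : b = b' := hdir
      refine ⟨⟨e, true⟩, ⟨hmem, hlabel, .inl rfl⟩, ?_, ?_⟩ <;> cases b <;> assumption
    · exact Reads.step_edge (d := d') ⟨h.mem', h.label_eq.symm, .inr hcone⟩
        ⟨d, ⟨hmem, rfl, .inr hcone⟩, (Y.src_mapVertices _ d).trans hsrc,
          (Y.tgt_mapVertices _ d).trans htgt⟩
  · exact Step.of_edge (Z := foldDarts Y d d') (Finset.mem_erase.2 ⟨hed, he⟩)

lemma liftable (h : C.IsFoldPair Y d d')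
    (hlift : C.Liftable (foldDarts Y d d') (∅ : Finset (ZMod L → Dart))) :
    C.Liftable Y (∅ : Finset (ZMod L → Dart)) := by
  obtain ⟨lam, hlam⟩ := hlift
  set g := d.value lam with hg
  let lam' := Function.update lam d'.edge (if d'.fwd then g else g⁻¹)
  have hother {e : ℕ} (he : e ≠ d'.edge) : lam' e = lam e := Function.update_of_ne he _ _
  have hd : d.value lam' = g := Dart.value_congr (hother h.edge_ne)
  have hd' : d'.value lam' = g := Dart.value_update_self _ _
  have hproj {e : ℕ} (he : e ∈ Y.edges) (hed : e ≠ d'.edge) :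
      C.proj (lam e) = C.holonomy Y e := hlam.proj_eq e (Finset.mem_erase.2 ⟨hed, he⟩)
  refine ⟨lam', fun e he => ?_, by simp, fun x => .of_mapVertices (q := foldMap Y d d')
    (fun v => ?_) ((hlam.isWalk x).map_vertices id fun e he => ?_)⟩
  · by_cases hed : e = d'.edge
    · rw [hed, ← d'.map_value_eq_iff, hd', ← h.value_holonomy, hg, d.map_value_eq_iff]
      exact hproj h.mem h.edge_ne
    · rw [hother hed, hproj he hed]
  · by_cases hv : v = Y.tgt d'
    · have hback := ((LabeledGraph.IsWalk.dart (μ := lam') h.mem').symm.cast rfl rfl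
        h.src_eq.symm).append (.dart h.mem)
      exact hback.cast hv.symm (by simp [hd, hd']) (by simp [foldMap, hv])
    · simpa [foldMap, hv] using LabeledGraph.IsWalk.nil v
  · obtain ⟨hed, he⟩ := Finset.mem_erase.1 he
    exact (LabeledGraph.IsWalk.edge (Z := Y.mapVertices (foldMap Y d d')) he).cast rfl
      (hother hed) rfl

lemma isReduction (h : C.IsFoldPair Y d d') :
    C.IsReduction (foldMap Y d d') Y ∅ (foldDarts Y d d') (∅ : Finset (ZMod L → Dart)) :=
  ⟨rfl, h.isMorphism, h.liftable⟩

end IsFoldPair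

end Fold

section AddEdge

open LabeledGraph

variable {n u v w : ℕ} {y : X} {D : ZMod L → Dart} {k : ZMod L} {Ψ : Finset (ZMod L → Dart)}

lemma Reads.addEdge (hn : n ∉ Z.edges) (h : C.Reads Z d y) :
    C.Reads (Z.addEdge n u x v) d y :=
  ⟨mem_edges_addEdge.2 (.inr h.1),
    (label_addEdge (ne_of_mem_of_not_mem h.1 hn)).trans h.2.1, h.2.2⟩

lemma reads_addEdge_self : C.Reads (Z.addEdge n u x v) ⟨n, true⟩ x :=
  ⟨mem_edges_addEdge.2 (.inl rfl), label_addEdge_self, .inl rfl⟩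

lemma step_addEdge_self : C.Step (Z.addEdge n u x v) u x v :=
  ⟨⟨n, true⟩, reads_addEdge_self, source_addEdge_self,
    target_addEdge_self⟩

lemma isMorphism_addEdge (hn : n ∉ Z.edges) : C.IsMorphism id Z (Z.addEdge n u x v) :=
  fun e he =>
    have hen : e ≠ n := ne_of_mem_of_not_mem he hn
    ⟨⟨e, true⟩, Reads.addEdge hn ⟨he, rfl, .inl rfl⟩, src_addEdge hen,
      tgt_addEdge hen⟩

lemma Folded.addEdge (hZ : C.Folded Z) (hout : ∀ d, C.Reads Z d x → Z.src d ≠ u)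
    (hin : ∀ d, C.Reads Z d x → Z.tgt d ≠ v) : C.Folded (Z.addEdge n u x v) := by
  have hnew {d d' : Dart} (hd : d.edge = n) (hn : d'.edge ≠ n) (hd' : d'.edge ∈ Z.edges)
      (hsrc : (Z.addEdge n u x v).src d = Z.src d') (hlabel : Z.label d'.edge = x)
      (hdir : d.fwd = d'.fwd ∨ C.IsCone x) : False := by
    obtain ⟨e, _ | _⟩ := d <;> obtain rfl : e = n := hd
    · refine hin d'.rev ⟨hd', hlabel, hdir.imp_left fun h => ?_⟩ (by simpa using hsrc.symm)
      simp [Dart.rev, ← h]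
    · exact hout d' ⟨hd', hlabel, hdir.imp_left Eq.symm⟩ (by simpa using hsrc.symm)
  intro d d' hd hd' hsrc hlabel hdir
  have hmem {d : Dart} (hd : d.edge ∈ (Z.addEdge n u x v).edges) (hdn : d.edge ≠ n) :
      d.edge ∈ Z.edges := (mem_edges_addEdge.1 hd).resolve_left hdn
  by_cases hdn : d.edge = n <;> by_cases hdn' : d'.edge = n
  · rw [hdn, hdn']
  · rw [src_addEdge hdn'] at hsrc
    rw [hdn, label_addEdge_self] at hlabel hdir
    rw [label_addEdge hdn'] at hlabel
    exact (hnew hdn hdn' (hmem hd' hdn') hsrc hlabel.symm hdir).elim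
  · rw [src_addEdge hdn] at hsrc
    rw [hlabel] at hdir
    rw [hdn', label_addEdge_self] at hlabel hdir
    rw [label_addEdge hdn] at hlabel
    exact (hnew hdn' hdn (hmem hd hdn) hsrc.symm hlabel (hdir.imp_left Eq.symm)).elim
  · rw [src_addEdge hdn, src_addEdge hdn'] at hsrc
    rw [label_addEdge hdn] at hlabel hdir
    rw [label_addEdge hdn'] at hlabel
    exact hZ (hmem hd hdn) (hmem hd' hdn') hsrc hlabel hdir

protected lemma IsFace.src_addEdge (hn : n ∉ Z.edges) (h : C.IsFace Z D) (i : ZMod L) :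
    (Z.addEdge n u x v).src (D i) = Z.src (D i) :=
  src_addEdge (ne_of_mem_of_not_mem (h.1 i).1 hn)

lemma IsFace.addEdge (hn : n ∉ Z.edges) (h : C.IsFace Z D) : C.IsFace (Z.addEdge n u x v) D :=
  ⟨fun i => (h.1 i).addEdge hn, fun i => by
    rw [h.src_addEdge hn, tgt_addEdge (ne_of_mem_of_not_mem (h.1 i).1 hn), h.2]⟩

lemma Connected.addEdge (hn : n ∉ Z.edges) (hZ : C.Connected Z)
    (hu : C.Reachable (Z.addEdge n u x v) u) : C.Connected (Z.addEdge n u x v) := by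
  intro e he
  by_cases hen : e = n
  · simpa [hen] using hu
  · have he' := (mem_edges_addEdge.1 he).resolve_left hen
    rw [source_addEdge hen]
    exact (isMorphism_addEdge hn).reachable rfl (hZ e he')

lemma IsFoldedComplex.addEdge (hZ : C.IsFoldedComplex Z Ψ) (hn : n ∉ Z.edges)
    (hout : ∀ d, C.Reads Z d x → Z.src d ≠ u) (hin : ∀ d, C.Reads Z d x → Z.tgt d ≠ v)
    (hu : C.Reachable (Z.addEdge n u x v) u) : C.IsFoldedComplex (Z.addEdge n u x v) Ψ where
  folded := hZ.folded.addEdge hout hin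
  isFace D hD := (hZ.isFace D hD).addEdge hn
  eq_of_src_eq D hD D' hD' i hi := hZ.eq_of_src_eq D hD D' hD' i <| by
    rwa [(hZ.isFace D hD).src_addEdge hn, (hZ.isFace D' hD').src_addEdge hn] at hi
  connected := hZ.connected.addEdge hn hu
  loopsSurject := (isMorphism_addEdge hn).loopsSurject rfl hZ.loopsSurject

variable [NeZero L]

lemma IsFoldedComplex.insert (hZ : C.IsFoldedComplex Z Ψ) (hD : C.IsFace Z D)
    (hk : ∀ D' ∈ Ψ, Z.src (D k) ≠ Z.src (D' k)) : C.IsFoldedComplex Z (insert D Ψ) where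
  folded := hZ.folded
  isFace D' hD' := by
    rcases Finset.mem_insert.1 hD' with rfl | hD'
    · exact hD
    · exact hZ.isFace D' hD'
  eq_of_src_eq D₁ h₁ D₂ h₂ i hi := by
    rw [Finset.mem_insert] at h₁ h₂
    rcases h₁ with rfl | h₁ <;> rcases h₂ with rfl | h₂
    · rfl
    · exact (hk D₂ h₂ (hD.src_eq_of_src_eq hZ.folded (hZ.isFace D₂ h₂) hi k)).elim
    · exact (hk D₁ h₁ (hD.src_eq_of_src_eq hZ.folded (hZ.isFace D₁ h₁) hi.symm k)).elim
    · exact hZ.eq_of_src_eq D₁ h₁ D₂ h₂ i hi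
  connected := hZ.connected
  loopsSurject := hZ.loopsSurject

/-- The new edge can be avoided by going around the new face. -/
lemma IsFace.isReduction_addEdge (hn : n ∉ Z.edges) (hD : C.IsFace (Z.addEdge n u x v) D)
    (hk : (D k).edge = n) (hother : ∀ i, i ≠ k → (D i).edge ∈ Z.edges)
    (Ψ : Finset (ZMod L → Dart)) :
    C.IsReduction id Z Ψ (Z.addEdge n u x v) (Insert.insert D Ψ) where
  map_base := rfl
  isMorphism := isMorphism_addEdge hn
  liftable := by
    rintro ⟨lam, hlam⟩
    refine ⟨lam, fun e he => ?_,
      fun D' hD' => hlam.cycProd_eq_one D' (Finset.mem_insert_of_mem hD'), fun g => ?_⟩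
    · rw [hlam.proj_eq e (mem_edges_addEdge.2 (.inr he)), holonomy, holonomy,
        label_addEdge (ne_of_mem_of_not_mem he hn)]
    · refine ((hlam.isWalk g).eraseEdge (k := k) (fun i => (hD.1 i).1) hD.2
        (fun i hi => hk ▸ ne_of_mem_of_not_mem (hother i hi) hn)
        (hlam.cycProd_eq_one D (Finset.mem_insert_self _ _))).map_vertices id fun e he => ?_
      obtain ⟨hen, he⟩ := Finset.mem_erase.1 he
      rw [hk] at hen
      change Z.IsWalk lam ((Z.addEdge n u x v).source e) (lam e) ((Z.addEdge n u x v).target e)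
      rw [source_addEdge hen, target_addEdge hen]
      exact .edge ((mem_edges_addEdge.1 he).resolve_left hen)

lemma IsFoldedComplex.exists_face (hZ : C.IsFoldedComplex Z Ψ) {c : ZMod L → ℕ}
    (hc : ∀ i, i ≠ k → C.Step Z (c i) (C.relator i) (c (i + 1)))
    (hout : ∀ d, C.Reads Z d (C.relator k) → Z.src d ≠ c k)
    (hin : ∀ d, C.Reads Z d (C.relator k) → Z.tgt d ≠ c (k + 1)) (hreach : C.Reachable Z (c k)) :
    ∃ Z' Ψ', C.IsFoldedComplex Z' Ψ' ∧ C.IsReduction id Z Ψ Z' Ψ' ∧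
      Z'.edges.card ≤ Z.edges.card + 1 ∧ C.Step Z' (c k) (C.relator k) (c (k + 1)) := by
  choose! D hD hsrc htgt using hc
  obtain ⟨n, hn⟩ := Infinite.exists_notMem_finset Z.edges
  let Z' := Z.addEdge n (c k) (C.relator k) (c (k + 1))
  let D' := Function.update D k ⟨n, true⟩
  have hself : D' k = ⟨n, true⟩ := Function.update_self _ _ _
  have hother {i : ZMod L} (hi : i ≠ k) : D' i = D i := Function.update_of_ne hi _ _
  have hDn {i : ZMod L} (hi : i ≠ k) : (D i).edge ≠ n := ne_of_mem_of_not_mem (hD i hi).1 hn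
  have hends (i : ZMod L) : C.Reads Z' (D' i) (C.relator i) ∧ Z'.src (D' i) = c i ∧
      Z'.tgt (D' i) = c (i + 1) := by
    by_cases hi : i = k
    · subst hi
      rw [hself]
      exact ⟨reads_addEdge_self, by simp [Z'], by simp [Z']⟩
    · rw [hother hi]
      exact ⟨(hD i hi).addEdge hn, (src_addEdge (hDn hi)).trans (hsrc i hi),
        (tgt_addEdge (hDn hi)).trans (htgt i hi)⟩
  have hface : C.IsFace Z' D' :=
    ⟨fun i => (hends i).1, fun i => (hends i).2.2.trans (hends (i + 1)).2.1.symm⟩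
  refine ⟨Z', Insert.insert D' Ψ, ?_, ?_, Finset.card_insert_le _ _, step_addEdge_self⟩
  · refine (hZ.addEdge hn hout hin ((isMorphism_addEdge hn).reachable rfl hreach)).insert
      (k := k) hface fun D'' hD'' => ?_
    rw [(hends k).2.1, (hZ.isFace D'' hD'').src_addEdge hn]
    exact (hout _ ((hZ.isFace D'' hD'').1 k)).symm
  · exact hface.isReduction_addEdge hn (congrArg Dart.edge hself)
      (fun i hi => hother hi ▸ (hD i hi).1) Ψ

end AddEdge

section Foldable

open LabeledGraph

variable {Y : LabeledGraph X} {Φ Ψ : Finset (ZMod L → Dart)} {f : ℕ → ℕ} {D : ZMod L → Dart}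
  {k : ZMod L}

variable (C) in
/-- A connected complex that collapses to a graph and whose loops at the base vertex take all
values in `G`. -/
structure IsCollapsibleComplex (Y : LabeledGraph X) (Φ : Finset (ZMod L → Dart)) : Prop where
  isFace : ∀ D ∈ Φ, C.IsFace Y D
  collapsible : Collapsible Φ
  connected : C.Connected Y
  loopsSurject : C.LoopsSurject Y

variable (C) in
/-- The complex with graph `Y` and faces `Φ` reduces to a folded complex with at most as many
edges. -/
def Foldable (Y : LabeledGraph X) (Φ : Finset (ZMod L → Dart)) : Prop :=
  ∃ Z Ψ f, C.IsFoldedComplex Z Ψ ∧ C.IsReduction f Y Φ Z Ψ ∧ Z.edges.card ≤ Y.edges.card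

lemma isCollapsibleComplex_empty_iff :
    C.IsCollapsibleComplex Y (∅ : Finset (ZMod L → Dart)) ↔ C.Connected Y ∧ C.LoopsSurject Y :=
  ⟨fun h => ⟨h.connected, h.loopsSurject⟩, fun h =>
    ⟨by simp, fun _ hΨ hne => (hne.ne_empty (Finset.subset_empty.1 hΨ)).elim, h.1, h.2⟩⟩

lemma IsFoldPair.isCollapsibleComplex (h : C.IsFoldPair Y d d')
    (hY : C.IsCollapsibleComplex Y (∅ : Finset (ZMod L → Dart))) :
    C.IsCollapsibleComplex (foldDarts Y d d') (∅ : Finset (ZMod L → Dart)) :=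
  isCollapsibleComplex_empty_iff.2
    ⟨fun e he => h.isMorphism.reachable rfl (hY.connected e (Finset.mem_of_mem_erase he)),
      h.isMorphism.loopsSurject rfl hY.loopsSurject⟩

variable [NeZero L]

lemma IsReduction.of_eraseEdge (hD : C.ReadsRelator Y D) (hmem : D ∈ Φ) (hfree : IsFreeAt Φ D k)
    (hf : C.IsReduction f (Y.eraseEdge (D k).edge) (Φ.erase D) Z Ψ)
    (hstep : C.Step Z (f (Y.src (D k))) (C.relator k) (f (Y.tgt (D k)))) :
    C.IsReduction f Y Φ Z Ψ where
  map_base := hf.map_base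
  isMorphism e he := by
    by_cases hek : e = (D k).edge
    · exact hek ▸ (hD k).step_edge hstep
    · exact hf.isMorphism e (Finset.mem_erase.2 ⟨hek, he⟩)
  liftable hZ := liftable_of_liftable_eraseEdge hD hfree hmem (hf.liftable hZ)

lemma IsCollapsibleComplex.isWalk_eraseEdge (hY : C.IsCollapsibleComplex Y Φ) (hD : D ∈ Φ)
    (hfree : IsFreeAt Φ D k) {a b : ℕ} {g : G} (hw : Y.IsWalk (C.holonomy Y) a g b) :
    (Y.eraseEdge (D k).edge).IsWalk (C.holonomy Y) a g b :=
  have hface := hY.isFace D hD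
  hw.eraseEdge (fun i => (hface.1 i).1) hface.2 (fun i hi he => hi (hfree D hD i he).2)
    hface.1.cycProd_holonomy

lemma IsCollapsibleComplex.eraseEdge (hY : C.IsCollapsibleComplex Y Φ) (hD : D ∈ Φ)
    (hfree : IsFreeAt Φ D k) :
    C.IsCollapsibleComplex (Y.eraseEdge (D k).edge) (Φ.erase D) := by
  refine ⟨fun D' hD' => ?_, fun Ψ hΨ hne => ?_, fun e he => ?_,
    fun g => hY.isWalk_eraseEdge hD hfree (hY.loopsSurject g)⟩
  · obtain ⟨hne, hD'⟩ := Finset.mem_erase.1 hD'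
    have hD'Y := hY.isFace D' hD'
    exact ⟨fun i => ⟨Finset.mem_erase.2 ⟨fun he => hne (hfree D' hD' i he).1, (hD'Y.1 i).1⟩,
      (hD'Y.1 i).2⟩, hD'Y.2⟩
  · exact hY.collapsible Ψ (hΨ.trans (Finset.erase_subset _ _)) hne
  · obtain ⟨g, hg⟩ := hY.connected e (Finset.mem_of_mem_erase he)
    exact ⟨g, hY.isWalk_eraseEdge hD hfree hg⟩

lemma IsFoldedComplex.isCollapsibleComplex_glueGap (hZ : C.IsFoldedComplex Z Ψ)
    (hgap : C.IsGapFace Z D k) :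
    C.IsCollapsibleComplex (Z.mapVertices (glueGap Z D k)) (Insert.insert D Ψ) where
  isFace D' hD' := by
    rcases Finset.mem_insert.1 hD' with rfl | hD'
    · exact hgap.isFace_mapVertices_glueGap
    · exact (hZ.isFace D' hD').mapVertices _
  collapsible := hZ.collapsible_insert hgap
  connected e he := (IsMorphism.mapVertices Z _).reachable rfl (hZ.connected e he)
  loopsSurject := (IsMorphism.mapVertices Z _).loopsSurject rfl hZ.loopsSurject

lemma IsFoldedComplex.exists_closing (hZ : C.IsFoldedComplex Z Ψ)
    (hfold : ∀ Y Φ, C.IsCollapsibleComplex Y Φ → Y.edges.card ≤ Z.edges.card → C.Foldable Y Φ)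
    {a b : ZMod L → ℕ} {j : ZMod L} (hstep : ∀ i, C.Step Z (a i) (C.relator i) (b i))
    (hab : ∀ i, i ≠ j → b i = a (i + 1)) :
    ∃ Z' Ψ' q, C.IsFoldedComplex Z' Ψ' ∧ C.IsReduction q Z Ψ Z' Ψ' ∧
      Z'.edges.card ≤ Z.edges.card ∧ q (b j) = q (a (j + 1)) := by
  by_cases hj : b j = a (j + 1)
  · exact ⟨Z, Ψ, id, hZ, .refl Z Ψ, le_rfl, hj⟩
  choose D hD hsrc htgt using hstep
  have hgap : C.IsGapFace Z D j :=
    ⟨hD, fun i hi => by rw [htgt, hsrc, hab i hi], by rwa [htgt, hsrc]⟩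
  obtain ⟨Z', Ψ', f, hZ', hf, hcard⟩ := hfold _ _ (hZ.isCollapsibleComplex_glueGap hgap) le_rfl
  have hglue := congrArg f (glueGap_tgt Z D j)
  rw [htgt, hsrc] at hglue
  exact ⟨Z', Ψ', _, hZ', (hgap.isReduction_glueGap Ψ).trans hf, hcard, hglue⟩

lemma IsFoldedComplex.exists_step (hZ : C.IsFoldedComplex Z Ψ)
    (hfold : ∀ Y Φ, C.IsCollapsibleComplex Y Φ → Y.edges.card ≤ Z.edges.card → C.Foldable Y Φ)
    {c : ZMod L → ℕ} (hc : ∀ i, i ≠ k → C.Step Z (c i) (C.relator i) (c (i + 1)))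
    (hreach : C.Reachable Z (c k)) :
    ∃ Z' Ψ' q, C.IsFoldedComplex Z' Ψ' ∧ C.IsReduction q Z Ψ Z' Ψ' ∧
      Z'.edges.card ≤ Z.edges.card + 1 ∧ C.Step Z' (q (c k)) (C.relator k) (q (c (k + 1))) := by
  by_cases hout : ∃ d, C.Reads Z d (C.relator k) ∧ Z.src d = c k
  · obtain ⟨d, hd, hsrc⟩ := hout
    have hstep : C.Step Z (c k) (C.relator k) (Z.tgt d) := ⟨d, hd, hsrc, rfl⟩
    obtain ⟨Z', Ψ', q, hZ', hq, hcard, hclose⟩ := hZ.exists_closing hfold (a := c)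
      (b := Function.update (fun i => c (i + 1)) k (Z.tgt d)) (j := k)
      (fun i => by
        by_cases hi : i = k
        · subst hi
          simpa using hstep
        · simpa [hi] using hc i hi)
      fun i hi => Function.update_of_ne hi _ _
    rw [Function.update_self] at hclose
    exact ⟨Z', Ψ', q, hZ', hq, hcard.trans (Nat.le_succ _), hclose ▸ hq.isMorphism.step hstep⟩
  by_cases hin : ∃ d, C.Reads Z d (C.relator k) ∧ Z.tgt d = c (k + 1)
  · obtain ⟨d, hd, htgt⟩ := hin
    have hstep : C.Step Z (Z.src d) (C.relator k) (c (k + 1)) := ⟨d, hd, rfl, htgt⟩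
    obtain ⟨Z', Ψ', q, hZ', hq, hcard, hclose⟩ := hZ.exists_closing hfold
      (a := Function.update c k (Z.src d)) (b := fun i => c (i + 1)) (j := k - 1)
      (fun i => by
        by_cases hi : i = k
        · subst hi
          simpa using hstep
        · simpa [hi] using hc i hi)
      fun i hi => (Function.update_of_ne (fun h => hi (eq_sub_of_add_eq h)) _ _).symm
    simp only [sub_add_cancel, Function.update_self] at hclose
    exact ⟨Z', Ψ', q, hZ', hq, hcard.trans (Nat.le_succ _), hclose ▸ hq.isMorphism.step hstep⟩
  push Not at hout hin
  obtain ⟨Z', Ψ', hZ', hred, hcard, hstep⟩ := hZ.exists_face hc hout hin hreach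
  exact ⟨Z', Ψ', id, hZ', hred, hcard, hstep⟩

lemma IsCollapsibleComplex.foldable_of_mem (hY : C.IsCollapsibleComplex Y Φ)
    (hfold : ∀ Y' Φ', C.IsCollapsibleComplex Y' Φ' → Y'.edges.card < Y.edges.card →
      C.Foldable Y' Φ')
    (hD : D ∈ Φ) (hfree : IsFreeAt Φ D k) : C.Foldable Y Φ := by
  have hface := hY.isFace D hD
  have herase := Finset.card_erase_add_one (hface.1 k).1
  obtain ⟨Z, Ψ, f, hZ, hf, hcard⟩ := hfold _ _ (hY.eraseEdge hD hfree)
    (Finset.card_erase_lt_of_mem (hface.1 k).1)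
  have hcard' : Z.edges.card + 1 ≤ Y.edges.card := herase ▸ Nat.succ_le_succ hcard
  have hpath (i : ZMod L) (hi : i ≠ k) :
      C.Step Z (f (Y.src (D i))) (C.relator i) (f (Y.src (D (i + 1)))) :=
    hf.isMorphism.step ⟨D i, ⟨Finset.mem_erase.2 ⟨fun he => hi (hfree D hD i he).2,
      (hface.1 i).1⟩, (hface.1 i).2⟩, rfl, hface.2 i⟩
  obtain ⟨g, hg⟩ := hY.connected.reachable_src (hface.1 k).1
  obtain ⟨Z', Ψ', q, hZ', hq, hcard'', hstep⟩ := hZ.exists_step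
    (fun Y' Φ' hY' hle => hfold Y' Φ' hY' (by omega)) hpath
    (hf.reachable ⟨g, hY.isWalk_eraseEdge hD hfree hg⟩)
  rw [← hface.2] at hstep
  exact ⟨Z', Ψ', q ∘ f, hZ', .of_eraseEdge hface.1 hD hfree (hf.trans hq) hstep,
    hcard''.trans hcard'⟩

theorem IsCollapsibleComplex.foldable (hY : C.IsCollapsibleComplex Y Φ) : C.Foldable Y Φ := by
  induction hn : Y.edges.card using Nat.strong_induction_on generalizing Y Φ with
  | h n ih =>
    subst hn
    have hfold Y' Φ' (hY' : C.IsCollapsibleComplex Y' Φ')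
        (hlt : Y'.edges.card < Y.edges.card) : C.Foldable Y' Φ' := ih _ hlt hY' rfl
    rcases Φ.eq_empty_or_nonempty with rfl | hne
    · by_cases hYf : C.Folded Y
      · exact ⟨Y, ∅, id, ⟨hYf, by simp, by simp, hY.connected, hY.loopsSurject⟩, .refl Y ∅, le_rfl⟩
      · obtain ⟨d, d', h⟩ := exists_isFoldPair hYf
        have hlt : (foldDarts Y d d').edges.card < Y.edges.card :=
          Finset.card_erase_lt_of_mem h.mem'
        obtain ⟨Z, Ψ, f, hZ, hf, hcard⟩ := hfold _ _ (h.isCollapsibleComplex hY) hlt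
        exact ⟨Z, Ψ, _, hZ, h.isReduction.trans hf, hcard.trans hlt.le⟩
    · obtain ⟨D, hD, k, hfree⟩ := hY.collapsible Φ subset_rfl hne
      exact hY.foldable_of_mem hfold hD hfree

end Foldable

section ReadsWord

variable {Y : LabeledGraph X} {f : ℕ → ℕ} {a b c u v : ℕ} {w : FreeGroup X}

variable (C) in
/-- `C.ReadsWord Z a w b`: the word `w` can be read along a path in `Z` from `a` to `b`, possibly
after inserting or deleting cancelling pairs of letters. -/
inductive ReadsWord (Z : LabeledGraph X) : ℕ → FreeGroup X → ℕ → Prop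
  | of {a : ℕ} {x : X} {b : ℕ} (h : C.Step Z a x b) : ReadsWord Z a (FreeGroup.of x) b
  | one (a : ℕ) : ReadsWord Z a 1 a
  | mul {a b c : ℕ} {w w' : FreeGroup X} (h : ReadsWord Z a w b) (h' : ReadsWord Z b w' c) :
      ReadsWord Z a (w * w') c
  | inv {a b : ℕ} {w : FreeGroup X} (h : ReadsWord Z a w b) : ReadsWord Z b w⁻¹ a

lemma ReadsWord.map (hf : C.IsMorphism f Y Z) (h : C.ReadsWord Y a w b) :
    C.ReadsWord Z (f a) w (f b) := by
  induction h with
  | of h => exact .of (hf.step h)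
  | one a => exact .one _
  | mul _ _ ih ih' => exact ih.mul ih'
  | inv _ ih => exact ih.inv

lemma ReadsWord.prod_range {y : ℕ → ℕ} {g : ℕ → FreeGroup X} {n : ℕ}
    (h : ∀ j < n, C.ReadsWord Z (y j) (g j) (y (j + 1))) :
    C.ReadsWord Z (y 0) ((List.range n).map g).prod (y n) := by
  induction n with
  | zero => exact .one _
  | succ n ih =>
    rw [List.prod_range_succ]
    exact (ih fun j hj => h j (by omega)).mul (h n n.lt_succ_self)

lemma exists_readsWord_of_isWalk {g : G} (h : Z.IsWalk (C.holonomy Z) a g b) :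
    ∃ w, FreeGroup.lift C.gen w = g ∧ C.ReadsWord Z a w b := by
  induction h with
  | nil a => exact ⟨1, map_one _, .one a⟩
  | cons d g c hd _ ih =>
    obtain ⟨w, rfl, hw⟩ := ih
    obtain ⟨e, _ | _⟩ := d
    · exact ⟨_, by simp, (ReadsWord.of (.of_edge hd)).inv.mul hw⟩
    · exact ⟨_, by simp, (ReadsWord.of (.of_edge hd)).mul hw⟩

namespace Folded

lemma tgt_eq_of_step (hZ : C.Folded Z) (h : C.Step Z u x a) (h' : C.Step Z u x b) : a = b := by
  obtain ⟨d, hd, rfl, rfl⟩ := h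
  obtain ⟨d', hd', hs, rfl⟩ := h'
  exact (hZ.edge_and_tgt_eq hd hd' hs.symm).2

lemma src_eq_of_step (hZ : C.Folded Z) (h : C.Step Z a x v) (h' : C.Step Z b x v) : a = b := by
  obtain ⟨d, hd, rfl, rfl⟩ := h
  obtain ⟨d', hd', rfl, ht⟩ := h'
  exact (hZ.edge_and_src_eq hd hd' ht.symm).2

lemma exists_perm (hZ : C.Folded Z) (x : X) :
    ∃ σ : Equiv.Perm ℕ, ∀ a b, C.Step Z a x b → σ b = a := by
  let s : Set ℕ := {b | ∃ a, C.Step Z a x b}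
  have hs : s.Finite := by
    refine (Z.edges.finite_toSet.image Z.target |>.union
      (Z.edges.finite_toSet.image Z.source)).subset ?_
    rintro _ ⟨_, ⟨e, _ | _⟩, hd, -, rfl⟩
    · exact .inr ⟨e, hd.1, rfl⟩
    · exact .inl ⟨e, hd.1, rfl⟩
  choose p hp using fun b : s => b.2
  have hinj : Function.Injective p := fun b b' h =>
    Subtype.ext (hZ.tgt_eq_of_step (hp b) (h ▸ hp b'))
  obtain ⟨σ, hσ⟩ := Cardinal.extend_function_of_lt ⟨p, hinj⟩
    (by simpa using hs) ⟨Equiv.refl ℕ⟩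
  exact ⟨σ, fun a b h => (hσ ⟨b, a, h⟩).trans (hZ.src_eq_of_step (hp ⟨b, a, h⟩) h)⟩

/-- The letters of a folded graph act on its vertices by partial injections. Completing these to
permutations turns reading words into a group action. -/
lemma exists_hom_perm (hZ : C.Folded Z) :
    ∃ φ : FreeGroup X →* Equiv.Perm ℕ, ∀ a w b, C.ReadsWord Z a w b → φ w b = a := by
  choose σ hσ using hZ.exists_perm
  refine ⟨FreeGroup.lift σ, fun a w b h => ?_⟩
  induction h with
  | of h => simpa using hσ _ _ _ h
  | one a => simp
  | mul _ _ ih ih' => rw [map_mul, Equiv.Perm.mul_apply, ih', ih]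
  | inv _ ih => rw [map_inv, Equiv.Perm.inv_eq_iff_eq, ih]

lemma eq_of_readsWord (hZ : C.Folded Z) (h : C.ReadsWord Z a w b) (h' : C.ReadsWord Z a w c) :
    b = c := by
  obtain ⟨φ, hφ⟩ := hZ.exists_hom_perm
  exact (φ w).injective ((hφ _ _ _ h).trans (hφ _ _ _ h').symm)

end Folded

end ReadsWord

section Extension

open LabeledGraph

variable {Ψ : Finset (ZMod L → Dart)} {m n u v t : ℕ}

lemma isReduction_addEdge_leaf (hn : n ∉ Z.edges) (hbase : Z.base ≠ m)
    (hm : ∀ e ∈ Z.edges, Z.source e ≠ m ∧ Z.target e ≠ m) (hv : v ≠ m)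
    (hends : u = v ∧ t = m ∨ u = m ∧ t = v) :
    C.IsReduction id Z Ψ (Z.addEdge n u x t) Ψ where
  map_base := rfl
  isMorphism := isMorphism_addEdge hn
  liftable := by
    rintro ⟨lam, hlam⟩
    refine ⟨lam, fun e he => ?_, hlam.cycProd_eq_one, fun g => ?_⟩
    · rw [hlam.proj_eq e (mem_edges_addEdge.2 (.inr he)), holonomy, holonomy,
        label_addEdge (ne_of_mem_of_not_mem he hn)]
    let γ : ℕ → P := Function.update 1 m (if t = m then lam n else (lam n)⁻¹)
    let q : ℕ → ℕ := Function.update id m v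
    have hγ {a : ℕ} (ha : a ≠ m) : γ a = 1 := Function.update_of_ne ha _ _
    have hq {a : ℕ} (ha : a ≠ m) : q a = a := Function.update_of_ne ha _ _
    have hwalk : Z.IsWalk lam (q Z.base) (γ Z.base * g * (γ Z.base)⁻¹) (q Z.base) := by
      refine (hlam.isWalk g).map_gauge q γ fun e he => ?_
      rcases mem_edges_addEdge.1 he with rfl | he
      · rw [source_addEdge_self, target_addEdge_self]
        rcases hends with ⟨rfl, rfl⟩ | ⟨rfl, rfl⟩
        · simpa [q, γ, hv] using IsWalk.nil _
        · simpa [q, γ, hv] using IsWalk.nil _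
      · have hen := ne_of_mem_of_not_mem he hn
        rw [source_addEdge hen, target_addEdge hen, hγ (hm e he).1, hγ (hm e he).2,
          hq (hm e he).1, hq (hm e he).2]
        simpa using IsWalk.edge he
    simpa [hγ hbase, hq hbase] using hwalk

lemma exists_fresh (Z : LabeledGraph X) (v : ℕ) :
    ∃ n m, n ∉ Z.edges ∧ Z.base ≠ m ∧ v ≠ m ∧ ∀ e ∈ Z.edges, Z.source e ≠ m ∧ Z.target e ≠ m := by
  obtain ⟨n, hn⟩ := Infinite.exists_notMem_finset Z.edges
  obtain ⟨m, hm⟩ := Infinite.exists_notMem_finset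
    (insert Z.base (insert v (Z.edges.image Z.source ∪ Z.edges.image Z.target)))
  simp only [Finset.mem_insert, Finset.mem_union, Finset.mem_image, not_or, not_exists,
    not_and] at hm
  exact ⟨n, m, hn, Ne.symm hm.1, Ne.symm hm.2.1, fun e he => ⟨hm.2.2.1 e he, hm.2.2.2 e he⟩⟩

lemma Reads.src_ne_and_tgt_ne (hd : C.Reads Z d x)
    (hm : ∀ e ∈ Z.edges, Z.source e ≠ m ∧ Z.target e ≠ m) : Z.src d ≠ m ∧ Z.tgt d ≠ m := by
  obtain ⟨e, _ | _⟩ := d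
  · exact (hm e hd.1).symm
  · exact hm e hd.1

namespace IsFoldedComplex

lemma exists_step_from (hZ : C.IsFoldedComplex Z Ψ) (hv : C.Reachable Z v) (x : X) :
    ∃ Z' c, C.IsFoldedComplex Z' Ψ ∧ C.IsReduction id Z Ψ Z' Ψ ∧ C.Reachable Z' c ∧
      C.Step Z' v x c := by
  by_cases hout : ∃ d, C.Reads Z d x ∧ Z.src d = v
  · obtain ⟨d, hd, rfl⟩ := hout
    exact ⟨Z, Z.tgt d, hZ, .refl Z Ψ, hv.tgt hd.1, d, hd, rfl, rfl⟩
  obtain ⟨n, m, hn, hbase, hvm, hm⟩ := exists_fresh Z v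
  have hv' : C.Reachable (Z.addEdge n v x m) v := (isMorphism_addEdge hn).reachable rfl hv
  have hstep : C.Step (Z.addEdge n v x m) v x m := step_addEdge_self
  refine ⟨_, m, hZ.addEdge hn (fun d hd hs => hout ⟨d, hd, hs⟩)
    (fun d hd => (hd.src_ne_and_tgt_ne hm).2) hv',
    isReduction_addEdge_leaf hn hbase hm hvm (.inl ⟨rfl, rfl⟩), ?_, hstep⟩
  obtain ⟨g, hg⟩ := hv'
  exact ⟨_, hg.append hstep.isWalk⟩

lemma exists_step_to (hZ : C.IsFoldedComplex Z Ψ) (hv : C.Reachable Z v) (x : X) :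
    ∃ Z' c, C.IsFoldedComplex Z' Ψ ∧ C.IsReduction id Z Ψ Z' Ψ ∧ C.Reachable Z' c ∧
      C.Step Z' c x v := by
  by_cases hin : ∃ d, C.Reads Z d x ∧ Z.tgt d = v
  · obtain ⟨d, hd, rfl⟩ := hin
    exact ⟨Z, Z.src d, hZ, .refl Z Ψ, hZ.connected.reachable_src hd.1, d, hd, rfl, rfl⟩
  obtain ⟨n, m, hn, hbase, hvm, hm⟩ := exists_fresh Z v
  have hstep : C.Step (Z.addEdge n m x v) m x v := step_addEdge_self
  have hm' : C.Reachable (Z.addEdge n m x v) m := by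
    obtain ⟨g, hg⟩ := (isMorphism_addEdge hn).reachable rfl hv
    exact ⟨_, hg.append hstep.isWalk.symm⟩
  exact ⟨_, m, hZ.addEdge hn (fun d hd => (hd.src_ne_and_tgt_ne hm).1)
    (fun d hd ht => hin ⟨d, hd, ht⟩) hm',
    isReduction_addEdge_leaf hn hbase hm hvm (.inr ⟨rfl, rfl⟩), hm', hstep⟩

lemma exists_readsWord (hZ : C.IsFoldedComplex Z Ψ) (hv : C.Reachable Z v) (w : FreeGroup X) :
    ∃ Z' c, C.IsFoldedComplex Z' Ψ ∧ C.IsReduction id Z Ψ Z' Ψ ∧ C.Reachable Z' c ∧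
      C.ReadsWord Z' v w c := by
  induction w using FreeGroup.induction_on generalizing Z v with
  | C1 => exact ⟨Z, v, hZ, .refl Z Ψ, hv, .one v⟩
  | of x =>
    obtain ⟨Z', c, hZ', hred, hc, hstep⟩ := hZ.exists_step_from hv x
    exact ⟨Z', c, hZ', hred, hc, .of hstep⟩
  | inv_of x =>
    obtain ⟨Z', c, hZ', hred, hc, hstep⟩ := hZ.exists_step_to hv x
    exact ⟨Z', c, hZ', hred, hc, (ReadsWord.of hstep).inv⟩
  | mul w w' ih ih' =>
    obtain ⟨Z₁, b, hZ₁, hred₁, hb, hw⟩ := ih hZ hv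
    obtain ⟨Z₂, c, hZ₂, hred₂, hc, hw'⟩ := ih' hZ₁ hb
    exact ⟨Z₂, c, hZ₂, hred₁.trans hred₂, hc, (hw.map hred₂.isMorphism).mul hw'⟩

lemma exists_relator_path (hZ : C.IsFoldedComplex Z Ψ) (hv : C.Reachable Z v) (n : ℕ) :
    ∃ Z', ∃ y : ℕ → ℕ, C.IsFoldedComplex Z' Ψ ∧ C.IsReduction id Z Ψ Z' Ψ ∧ C.Reachable Z' (y n) ∧
      y 0 = v ∧ ∀ j < n, C.Step Z' (y j) (C.relator j) (y (j + 1)) := by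
  induction n with
  | zero => exact ⟨Z, fun _ => v, hZ, .refl Z Ψ, hv, rfl, by simp⟩
  | succ n ih =>
    obtain ⟨Z₁, y, hZ₁, hred₁, hy, hy0, hstep⟩ := ih
    obtain ⟨Z₂, c, hZ₂, hred₂, hc, hlast⟩ := hZ₁.exists_step_from hy (C.relator n)
    have hold {j : ℕ} (hj : j ≤ n) : Function.update y (n + 1) c j = y j :=
      Function.update_of_ne (by omega) _ _
    refine ⟨Z₂, Function.update y (n + 1) c, hZ₂, hred₁.trans hred₂, by simpa using hc,
      by rw [hold n.zero_le, hy0], fun j hj => ?_⟩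
    rw [hold (Nat.le_of_lt_succ hj)]
    rcases Nat.lt_succ_iff_lt_or_eq.1 hj with hj | rfl
    · rw [hold hj]
      exact hred₂.isMorphism.step (hstep j hj)
    · simpa using hlast

variable [NeZero L]

lemma exists_readsWord_relator (hZ : C.IsFoldedComplex Z Ψ) (hv : C.Reachable Z v) :
    ∃ Z' Ψ' q, C.IsFoldedComplex Z' Ψ' ∧ C.IsReduction q Z Ψ Z' Ψ' ∧
      C.ReadsWord Z' (q v) (cycProd (fun i => FreeGroup.of (C.relator i)) 0) (q v) := by
  obtain ⟨Z₁, y, hZ₁, hred₁, -, rfl, hstep⟩ := hZ.exists_relator_path hv L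
  obtain ⟨Z₂, Ψ₂, q, hZ₂, hred₂, -, hq⟩ := hZ₁.exists_closing (fun _ _ h _ => h.foldable)
    (a := fun i => y i.val) (b := fun i => y (i.val + 1)) (j := -1)
    (fun i => by simpa using hstep i.val i.val_lt)
    (fun i hi => by rw [val_add_one_of_ne_neg_one hi])
  refine ⟨Z₂, Ψ₂, q, hZ₂, hred₁.trans hred₂, ?_⟩
  have hloop : C.ReadsWord Z₂ (q (y 0)) (cycProd (fun i => FreeGroup.of (C.relator i)) 0)
      (q (y L)) := by
    simp only [cycProd, zero_add]
    exact .prod_range (y := q ∘ y) fun j hj => .of (hred₂.isMorphism.step (hstep j hj))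
  rw [neg_add_cancel, ZMod.val_zero, val_neg_one_add_one] at hq
  rwa [hq] at hloop

lemma exists_readsWord_of_mem_ker {w : FreeGroup X} (hw : w ∈ (FreeGroup.lift C.gen).ker)
    (hZ : C.IsFoldedComplex Z Ψ) (hv : C.Reachable Z v) :
    ∃ Z' Ψ' q, C.IsFoldedComplex Z' Ψ' ∧ C.IsReduction q Z Ψ Z' Ψ' ∧
      C.ReadsWord Z' (q v) w (q v) := by
  rw [C.ker_lift_gen] at hw
  induction hw using Subgroup.closure_induction generalizing Z Ψ v with
  | mem w hw =>
    obtain ⟨r, hr, hconj⟩ := Group.mem_conjugatesOfSet_iff.1 hw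
    obtain ⟨g, rfl⟩ := isConj_iff.1 hconj
    obtain ⟨Z₁, c, hZ₁, hred₁, hc, hg⟩ := hZ.exists_readsWord hv g
    obtain ⟨Z₂, Ψ₂, q, hZ₂, hred₂, hloop⟩ : ∃ Z₂ Ψ₂ q, C.IsFoldedComplex Z₂ Ψ₂ ∧
        C.IsReduction q Z₁ Ψ Z₂ Ψ₂ ∧ C.ReadsWord Z₂ (q c) r (q c) := by
      rcases hr with ⟨x, hx, rfl⟩ | rfl
      · obtain ⟨Z₂, m, hZ₂, hred₂, -, hstep⟩ := hZ₁.exists_step_from hc x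
        exact ⟨Z₂, Ψ, id, hZ₂, hred₂, (ReadsWord.of hstep).mul (.of (hstep.symm hx))⟩
      · exact hZ₁.exists_readsWord_relator hc
    have hg' := hg.map hred₂.isMorphism
    exact ⟨Z₂, Ψ₂, _, hZ₂, hred₁.trans hred₂, (hg'.mul hloop).mul hg'.inv⟩
  | one => exact ⟨Z, Ψ, id, hZ, .refl Z Ψ, .one v⟩
  | mul w w' _ _ ih ih' =>
    obtain ⟨Z₁, Ψ₁, q₁, hZ₁, hred₁, hw⟩ := ih hZ hv
    obtain ⟨Z₂, Ψ₂, q₂, hZ₂, hred₂, hw'⟩ := ih' hZ₁ (hred₁.reachable hv)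
    exact ⟨Z₂, Ψ₂, _, hZ₂, hred₁.trans hred₂, (hw.map hred₂.isMorphism).mul hw'⟩
  | inv w _ ih =>
    obtain ⟨Z₁, Ψ₁, q, hZ₁, hred, hw⟩ := ih hZ hv
    exact ⟨Z₁, Ψ₁, q, hZ₁, hred, hw.inv⟩

/-- As the loops at the base vertex realize all of `G`, a letter can be read along the same path as
some word of a loop at the base vertex. -/
lemma exists_step_base (hZ : C.IsFoldedComplex Z Ψ) (x : X) :
    ∃ Z' Ψ' q, C.IsFoldedComplex Z' Ψ' ∧ C.IsReduction q Z Ψ Z' Ψ' ∧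
      C.Step Z' Z'.base x Z'.base := by
  obtain ⟨w, hwx, hw⟩ := exists_readsWord_of_isWalk (hZ.loopsSurject (C.gen x))
  have hbase {Z : LabeledGraph X} : C.Reachable Z Z.base := ⟨1, .nil _⟩
  obtain ⟨Z₁, c, hZ₁, hred₁, -, hstep⟩ := hZ.exists_step_from hbase x
  have hker : w⁻¹ * FreeGroup.of x ∈ (FreeGroup.lift C.gen).ker := by
    simp [MonoidHom.mem_ker, hwx]
  obtain ⟨Z₂, Ψ₂, q, hZ₂, hred₂, hloop⟩ :=
    exists_readsWord_of_mem_ker hker hZ₁ (hred₁.reachable hbase)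
  have hpath := ((hw.map hred₁.isMorphism).inv.mul (.of hstep)).map hred₂.isMorphism
  have hc : q c = q Z.base := hZ₂.folded.eq_of_readsWord hpath hloop
  have hqbase : q Z.base = Z₂.base := (hred₁.trans hred₂).map_base
  refine ⟨Z₂, Ψ₂, _, hZ₂, hred₁.trans hred₂, ?_⟩
  simpa [hc, hqbase] using hred₂.isMorphism.step hstep

lemma exists_forall_step_base (hZ : C.IsFoldedComplex Z Ψ) :
    ∃ Z' Ψ' q, C.IsFoldedComplex Z' Ψ' ∧ C.IsReduction q Z Ψ Z' Ψ' ∧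
      ∀ x, C.Step Z' Z'.base x Z'.base := by
  suffices h : ∀ n : ℕ, ∃ Z' Ψ' q, C.IsFoldedComplex Z' Ψ' ∧ C.IsReduction q Z Ψ Z' Ψ' ∧
      ∀ j < n, C.Step Z' Z'.base (C.relator j) Z'.base by
    obtain ⟨Z', Ψ', q, hZ', hred, hstep⟩ := h L
    refine ⟨Z', Ψ', q, hZ', hred, fun x => ?_⟩
    obtain ⟨i, rfl⟩ := C.relator_surjective x
    simpa using hstep i.val i.val_lt
  intro n
  induction n with
  | zero => exact ⟨Z, Ψ, id, hZ, .refl Z Ψ, by simp⟩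
  | succ n ih =>
    obtain ⟨Z₁, Ψ₁, q₁, hZ₁, hred₁, hstep⟩ := ih
    obtain ⟨Z₂, Ψ₂, q₂, hZ₂, hred₂, hlast⟩ := hZ₁.exists_step_base (C.relator n)
    refine ⟨Z₂, Ψ₂, _, hZ₂, hred₁.trans hred₂, fun j hj => ?_⟩
    rcases Nat.lt_succ_iff_lt_or_eq.1 hj with hj | rfl
    · simpa [hred₂.map_base] using hred₂.isMorphism.step (hstep j hj)
    · exact hlast

end IsFoldedComplex

end Extension

section LoopsAtBase

variable {Ψ : Finset (ZMod L → Dart)} {v e : ℕ}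

namespace IsFoldedComplex

lemma eq_base_of_reachable (hZ : C.IsFoldedComplex Z Ψ) (hstep : ∀ x, C.Step Z Z.base x Z.base)
    (hv : C.Reachable Z v) : v = Z.base := by
  obtain ⟨g, hg⟩ := hv
  obtain ⟨a, ha⟩ : ∃ a, a = Z.base := ⟨_, rfl⟩
  rw [← ha] at hg
  induction hg with
  | nil => exact ha
  | cons d g c hd _ ih =>
    refine ih ?_
    obtain ⟨e, _ | _⟩ := d
    · exact hZ.folded.src_eq_of_step (.of_edge hd) (ha ▸ hstep _)
    · exact hZ.folded.tgt_eq_of_step (.of_edge hd) (ha ▸ hstep _)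

lemma src_eq_base (hZ : C.IsFoldedComplex Z Ψ) (hstep : ∀ x, C.Step Z Z.base x Z.base)
    (hd : d.edge ∈ Z.edges) : Z.src d = Z.base :=
  hZ.eq_base_of_reachable hstep (hZ.connected.reachable_src hd)

/-- When the letters are loops at the base vertex, all faces start there, so there is at most one
and each cone letter occurs on it with a single orientation. -/
lemma exists_orientedLift (hZ : C.IsFoldedComplex Z Ψ) (hstep : ∀ x, C.Step Z Z.base x Z.base) :
    ∃ lam : ℕ → P, (∀ e, lam e = C.lift (Z.label e) ∨
        C.IsCone (Z.label e) ∧ lam e = (C.lift (Z.label e))⁻¹) ∧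
      ∀ D ∈ Ψ, ∀ i, (D i).value lam = C.lift (C.relator i) := by
  classical
  refine ⟨fun e => if ∃ D ∈ Ψ, ∃ i, D i = ⟨e, false⟩ then (C.lift (Z.label e))⁻¹
    else C.lift (Z.label e), fun e => ?_, fun D hD i => ?_⟩
  · by_cases he : ∃ D ∈ Ψ, ∃ i, D i = ⟨e, false⟩
    · obtain ⟨D, hD, i, hi⟩ := he
      have hread := hi ▸ (hZ.isFace D hD).1 i
      exact .inr ⟨hread.2.1 ▸ hread.2.2.resolve_left (by simp), if_pos ⟨D, hD, i, hi⟩⟩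
    · exact .inl (if_neg he)
  · have hread := (hZ.isFace D hD).1 i
    obtain ⟨e, b, hi⟩ : ∃ e b, D i = ⟨e, b⟩ := ⟨_, _, rfl⟩
    rw [hi] at hread ⊢
    cases b
    · rw [Dart.value_false, if_pos ⟨D, hD, i, hi⟩, inv_inv, ← hread.2.1]
    · rw [Dart.value_true, if_neg, ← hread.2.1]
      rintro ⟨D', hD', j, hj⟩
      have hread' := hj ▸ (hZ.isFace D' hD').1 j
      obtain rfl : D' = D := hZ.eq_of_src_eq D' hD' D hD i <| by
        rw [hZ.src_eq_base hstep ((hZ.isFace D' hD').1 i).1,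
          hZ.src_eq_base hstep ((hZ.isFace D hD).1 i).1]
      obtain rfl : i = j := C.eq_of_isCone j i (hread'.2.2.resolve_left (by simp))
        (hread.2.1.symm.trans hread'.2.1)
      simp [hi] at hj

lemma liftable_of_forall_step_base (hZ : C.IsFoldedComplex Z Ψ)
    (hstep : ∀ x, C.Step Z Z.base x Z.base) : C.Liftable Z Ψ := by
  obtain ⟨lam, hlam, hface⟩ := hZ.exists_orientedLift hstep
  refine ⟨lam, fun e _ => ?_, fun D hD => ?_, fun g => ?_⟩
  · rcases hlam e with h | ⟨hcone, h⟩
    · rw [h, C.proj_lift]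
    · rw [h, map_inv, C.proj_lift, gen_inv_of_isCone hcone]
  · simp only [hface D hD, C.cycProd_lift]
  · have hg : g ∈ Subgroup.closure (Set.range C.lift) := C.closure_range_lift ▸ Subgroup.mem_top g
    induction hg using Subgroup.closure_induction with
    | mem _ hx =>
      obtain ⟨x, rfl⟩ := hx
      obtain ⟨⟨e, b⟩, ⟨he, rfl, -⟩, -⟩ := hstep x
      have hwalk : Z.IsWalk lam Z.base (lam e) Z.base :=
        (LabeledGraph.IsWalk.edge he).cast (hZ.src_eq_base hstep (d := ⟨e, true⟩) he) rfl
          (hZ.src_eq_base hstep (d := ⟨e, false⟩) he)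
      rcases hlam e with h | ⟨-, h⟩
      · rwa [h] at hwalk
      · simpa [h] using hwalk.symm
    | one => exact .nil _
    | mul _ _ _ _ hg hg' => exact hg.append hg'
    | inv _ _ hg => exact hg.symm

theorem liftable [NeZero L] (hZ : C.IsFoldedComplex Z Ψ) : C.Liftable Z Ψ := by
  obtain ⟨Z', Ψ', q, hZ', hred, hstep⟩ := hZ.exists_forall_step_base
  exact hred.liftable (hZ'.liftable_of_forall_step_base hstep)

end IsFoldedComplex

end LoopsAtBase

end ConePresentation

/-! ### Lifting generating tuples -/

section WordRose

variable {X H : Type*} [Group H] {n : ℕ} {m : ℕ → ℕ} {w : ℕ → ℕ → X} {μ : ℕ → H}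

/-- The `j`-th vertex of the `i`-th petal of `wordRose n m w`. As `Nat.pair i j = 0` only if
`j = 0`, the center `0` of the rose is no inner vertex of a petal. -/
def petalVertex (m : ℕ → ℕ) (i j : ℕ) : ℕ := if j = 0 ∨ j = m i then 0 else Nat.pair i j

/-- The rose with `n` petals, the `i`-th of which is subdivided into `m i` edges and reads the word
`w i 0, …, w i (m i - 1)`. -/
def wordRose (n : ℕ) (m : ℕ → ℕ) (w : ℕ → ℕ → X) : LabeledGraph X where
  edges := (Finset.range n).biUnion fun i => (Finset.range (m i)).image (Nat.pair i)
  source e := petalVertex m e.unpair.1 e.unpair.2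
  target e := petalVertex m e.unpair.1 (e.unpair.2 + 1)
  label e := w e.unpair.1 e.unpair.2
  base := 0

lemma mem_edges_wordRose {e : ℕ} :
    e ∈ (wordRose n m w).edges ↔ ∃ i < n, ∃ j < m i, Nat.pair i j = e := by
  simp [wordRose]

@[simp] lemma petalVertex_zero (m : ℕ → ℕ) (i : ℕ) : petalVertex m i 0 = 0 := by
  simp [petalVertex]

@[simp] lemma petalVertex_length (m : ℕ → ℕ) (i : ℕ) : petalVertex m i (m i) = 0 := by
  simp [petalVertex]

/-- The value of the first `j` edges of the `i`-th petal. -/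
def petalProd (μ : ℕ → H) (i j : ℕ) : H := ((List.range j).map fun k => μ (Nat.pair i k)).prod

lemma petalProd_succ (μ : ℕ → H) (i j : ℕ) :
    petalProd μ i (j + 1) = petalProd μ i j * μ (Nat.pair i j) :=
  List.prod_range_succ _ _

lemma isWalk_wordRose {i j : ℕ} (hi : i < n) (hj : j ≤ m i) :
    (wordRose n m w).IsWalk μ 0 (petalProd μ i j) (petalVertex m i j) := by
  have hwalk := LabeledGraph.IsWalk.of_darts (Z := wordRose n m w) (μ := μ)
    (fun k => ⟨Nat.pair i k, true⟩) (petalVertex m i) j fun k hk =>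
      ⟨mem_edges_wordRose.2 ⟨i, hi, k, by omega, rfl⟩, by simp [wordRose], by simp [wordRose]⟩
  exact hwalk.cast (petalVertex_zero m i) rfl rfl

/-- The loops at the center are generated by the petals: a walk along a petal is accounted for by
the value of the part of the petal before each of its end points. -/
lemma mem_closure_of_isWalk_wordRose {g : H} (hg : (wordRose n m w).IsWalk μ 0 g 0) :
    g ∈ Subgroup.closure (Set.range fun i : Fin n => petalProd μ i (m i)) := by
  let γ : ℕ → H := fun v => petalProd μ v.unpair.1 v.unpair.2
  have hγ {i j : ℕ} (hj : j < m i) : γ (petalVertex m i j) = petalProd μ i j := by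
    by_cases hj0 : j = 0
    · simp [γ, hj0, petalProd]
    · simp [γ, petalVertex, hj0, hj.ne]
  have hγ0 : γ 0 = 1 := by simp [γ, petalProd]
  suffices h : γ 0 * g * (γ 0)⁻¹ ∈ Subgroup.closure (Set.range fun i : Fin n =>
      petalProd μ i (m i)) by
    simpa [hγ0] using h
  refine hg.mul_mul_inv_mem γ fun e he => ?_
  obtain ⟨i, hi, j, hj, rfl⟩ := mem_edges_wordRose.1 he
  have hedge : γ ((wordRose n m w).source (Nat.pair i j)) * μ (Nat.pair i j) =
      petalProd μ i (j + 1) := by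
    simp [wordRose, hγ hj, petalProd_succ]
  rw [hedge]
  by_cases hlast : j + 1 = m i
  · exact Subgroup.subset_closure ⟨⟨i, hi⟩, by simp [wordRose, hlast, hγ0]⟩
  · simp [wordRose, hγ (show j + 1 < m i by omega)]

end WordRose

namespace ConePresentation

variable {X G P : Type*} [Group G] [Group P] {L : ℕ} (C : ConePresentation X G P L)

/-- The inverse of a letter is the product of the other letters of the relator. -/
lemma closure_range_gen_submonoid [NeZero L] : Submonoid.closure (Set.range C.gen) = ⊤ := by
  rw [eq_top_iff]
  rintro g -
  have hg : g ∈ Subgroup.closure (Set.range C.gen) := C.closure_range_gen ▸ Subgroup.mem_top g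
  have hgen (x : X) : C.gen x ∈ Submonoid.closure (Set.range C.gen) :=
    Submonoid.subset_closure ⟨x, rfl⟩
  induction hg using Subgroup.closure_induction'' with
  | mem _ hx => exact Submonoid.subset_closure hx
  | inv_mem _ hx =>
    obtain ⟨x, rfl⟩ := hx
    obtain ⟨i, rfl⟩ := C.relator_surjective x
    have hcyc := cycProd_eq_one_of_eq_one C.cycProd_gen i
    rw [cycProd_eq_mul_cycProdErase] at hcyc
    rw [inv_eq_of_mul_eq_one_right hcyc]
    exact Submonoid.list_prod_mem _ (by simp [hgen])
  | one => exact one_mem _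
  | mul _ _ _ _ hg hg' => exact mul_mem hg hg'

lemma exists_prod_range_gen_eq [NeZero L] (g : G) :
    ∃ (m : ℕ) (w : ℕ → X), ((List.range m).map fun j => C.gen (w j)).prod = g := by
  have hg : g ∈ Submonoid.closure (Set.range C.gen) := by simp [C.closure_range_gen_submonoid]
  obtain ⟨l, hl, rfl⟩ := Submonoid.exists_list_of_mem_closure hg
  obtain ⟨l, rfl⟩ : l ∈ Set.range (List.map C.gen) := Set.range_list_map C.gen ▸ hl
  exact ⟨l.length, fun j => l.getD j (C.relator 0), congrArg List.prod
    (List.ext_getElem (by simp) fun j _ h => by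
      simp [List.getElem?_eq_getElem (show j < l.length by simpa using h)])⟩

variable {n : ℕ} {T : ℕ → G} {m : ℕ → ℕ} {w : ℕ → ℕ → X}

lemma petalProd_holonomy_wordRose (n : ℕ) (m : ℕ → ℕ) (w : ℕ → ℕ → X) (i j : ℕ) :
    petalProd (C.holonomy (wordRose n m w)) i j =
      ((List.range j).map fun k => C.gen (w i k)).prod := by
  simp [petalProd, holonomy, wordRose]

lemma isCollapsibleComplex_wordRose
    (hw : ∀ i, ((List.range (m i)).map fun j => C.gen (w i j)).prod = T i)
    (hT : Subgroup.closure (Set.range fun i : Fin n => T i) = ⊤) :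
    C.IsCollapsibleComplex (wordRose n m w) ∅ := by
  refine isCollapsibleComplex_empty_iff.2 ⟨fun e he => ?_, fun g => ?_⟩
  · obtain ⟨i, hi, j, hj, rfl⟩ := mem_edges_wordRose.1 he
    exact ⟨_, (isWalk_wordRose hi hj.le).cast rfl rfl (by simp [wordRose])⟩
  · have hg : g ∈ Subgroup.closure (Set.range fun i : Fin n => T i) := hT ▸ Subgroup.mem_top g
    induction hg using Subgroup.closure_induction with
    | mem _ hx =>
      obtain ⟨i, rfl⟩ := hx
      exact (isWalk_wordRose i.isLt le_rfl).cast rfl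
        ((C.petalProd_holonomy_wordRose n m w i (m i)).trans (hw i)) (petalVertex_length m i)
    | one => exact .nil _
    | mul _ _ _ _ hg hg' => exact hg.append hg'
    | inv _ _ hg => exact hg.symm

theorem exists_generating_lift [NeZero L] (T : Fin n → G)
    (hT : Subgroup.closure (Set.range T) = ⊤) :
    ∃ t : Fin n → P, (∀ i, C.proj (t i) = T i) ∧ Subgroup.closure (Set.range t) = ⊤ := by
  obtain ⟨T, rfl⟩ : ∃ T' : ℕ → G, T = fun i : Fin n => T' i :=
    ⟨fun i => if h : i < n then T ⟨i, h⟩ else 1, by simp⟩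
  choose m w hw using fun i => C.exists_prod_range_gen_eq (T i)
  obtain ⟨Z, Ψ, f, hZ, hred, -⟩ := (C.isCollapsibleComplex_wordRose hw hT).foldable
  obtain ⟨lam, hlam⟩ := hred.liftable hZ.liftable
  refine ⟨fun i => petalProd lam i (m i), fun i => ?_,
    eq_top_iff.2 fun g _ => mem_closure_of_isWalk_wordRose (hlam.isWalk g)⟩
  refine Eq.trans ?_ ((C.petalProd_holonomy_wordRose n m w i (m i)).trans (hw i))
  simp only [petalProd, map_list_prod, List.map_map]
  refine congrArg List.prod (List.map_congr_left fun j hj => ?_)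
  exact hlam.proj_eq _ (mem_edges_wordRose.2 ⟨i, i.isLt, j, List.mem_range.1 hj, rfl⟩)

end ConePresentation

/-! ### Cancellation in free groups -/

section CommonPrefix

variable {B : Type*} [DecidableEq B]

/-- The length of the longest common prefix of two lists. -/
def commonPrefixLength : List B → List B → ℕ
  | a :: l, b :: m => if a = b then commonPrefixLength l m + 1 else 0
  | _, _ => 0

lemma exists_append_of_commonPrefixLength : ∀ l m : List B, ∃ c l' m',
    l = c ++ l' ∧ m = c ++ m' ∧ c.length = commonPrefixLength l m ∧
      ∀ x ∈ l'.head?, ∀ y ∈ m'.head?, x ≠ y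
  | [], m => ⟨[], [], m, by simp [commonPrefixLength]⟩
  | x :: l, [] => ⟨[], x :: l, [], by simp [commonPrefixLength]⟩
  | x :: l, y :: m => by
    by_cases hxy : x = y
    · obtain ⟨c, l', m', hl, hm, hc, hne⟩ := exists_append_of_commonPrefixLength l m
      exact ⟨x :: c, l', m', by simp [hl], by simp [hm, hxy],
        by simp [commonPrefixLength, hxy, hc], hne⟩
    · exact ⟨[], x :: l, y :: m, by simp [commonPrefixLength, hxy]⟩

lemma min_commonPrefixLength_le : ∀ l m k : List B,
    min (commonPrefixLength l m) (commonPrefixLength m k) ≤ commonPrefixLength l k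
  | [], _, _ => by simp [commonPrefixLength]
  | _ :: _, [], _ => by simp [commonPrefixLength]
  | _ :: _, _ :: _, [] => by simp [commonPrefixLength]
  | x :: l, y :: m, z :: k => by
    have := min_commonPrefixLength_le l m k
    by_cases hxy : x = y <;> by_cases hyz : y = z <;> simp_all [commonPrefixLength]

lemma take_commonPrefixLength (l m : List B) :
    l.take (commonPrefixLength l m) = m.take (commonPrefixLength l m) := by
  obtain ⟨c, l', m', hl, hm, hc, -⟩ := exists_append_of_commonPrefixLength l m
  rw [← hc, hl, hm, List.take_left, List.take_left]

end CommonPrefix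

section GromovProduct

variable {A : Type*}

lemma isReduced_invRev {l : List (A × Bool)} (hl : FreeGroup.IsReduced l) :
    FreeGroup.IsReduced (FreeGroup.invRev l) := by
  classical
  rw [FreeGroup.isReduced_iff_reduce_eq, FreeGroup.reduce_invRev, hl.reduce_eq]

lemma isReduced_invRev_append {l m : List (A × Bool)} (hl : FreeGroup.IsReduced l)
    (hm : FreeGroup.IsReduced m) (hne : ∀ x ∈ l.head?, ∀ y ∈ m.head?, x ≠ y) :
    FreeGroup.IsReduced (FreeGroup.invRev l ++ m) := by
  refine List.isChain_append.2 ⟨isReduced_invRev hl, hm, fun x hx y hy hxy => ?_⟩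
  cases l with
  | nil => simp at hx
  | cons z l =>
    obtain rfl : (z.1, !z.2) = x := by simpa [FreeGroup.invRev] using hx
    have hz := hne z rfl y hy
    obtain ⟨_, _ | _⟩ := y <;> simp_all [Prod.ext_iff]

variable [DecidableEq A]

/-- The Gromov product of `x` and `y` based at `1`: the number of letters that cancel on either
side in the product `x⁻¹ * y`. -/
def gromovProduct (x y : FreeGroup A) : ℕ :=
  commonPrefixLength x.toWord y.toWord

lemma norm_inv_mul_add_two_mul_gromovProduct (x y : FreeGroup A) :
    (x⁻¹ * y).norm + 2 * gromovProduct x y = x.norm + y.norm := by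
  obtain ⟨c, l, m, hx, hy, hc, hne⟩ := exists_append_of_commonPrefixLength x.toWord y.toWord
  have hl : FreeGroup.IsReduced l :=
    FreeGroup.isReduced_toWord.infix ⟨c, [], by rw [List.append_nil, hx]⟩
  have hm : FreeGroup.IsReduced m :=
    FreeGroup.isReduced_toWord.infix ⟨c, [], by rw [List.append_nil, hy]⟩
  have hxy : x⁻¹ * y = FreeGroup.mk (FreeGroup.invRev l ++ m) := by
    rw [← FreeGroup.mk_toWord (x := x), ← FreeGroup.mk_toWord (x := y), hx, hy]
    simp only [← FreeGroup.mul_mk, ← FreeGroup.inv_mk]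
    group
  have hnorm : (x⁻¹ * y).toWord = FreeGroup.invRev l ++ m := by
    rw [hxy, FreeGroup.toWord_mk, (isReduced_invRev_append hl hm hne).reduce_eq]
  rw [gromovProduct, ← hc]
  simp only [FreeGroup.norm, hnorm, hx, hy, List.length_append, FreeGroup.invRev_length]
  lia

lemma norm_mul_add_two_mul_gromovProduct (x y : FreeGroup A) :
    (x * y).norm + 2 * gromovProduct x⁻¹ y = x.norm + y.norm := by
  simpa using norm_inv_mul_add_two_mul_gromovProduct x⁻¹ y

lemma gromovProduct_comm (x y : FreeGroup A) : gromovProduct x y = gromovProduct y x := by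
  have hxy := norm_inv_mul_add_two_mul_gromovProduct x y
  have hyx := norm_inv_mul_add_two_mul_gromovProduct y x
  rw [← FreeGroup.norm_inv_eq, mul_inv_rev, inv_inv] at hxy
  lia

@[simp] lemma gromovProduct_self (x : FreeGroup A) : gromovProduct x x = x.norm := by
  have := norm_inv_mul_add_two_mul_gromovProduct x x
  rw [inv_mul_cancel, FreeGroup.norm_one] at this
  lia

lemma min_gromovProduct_le (x y z : FreeGroup A) :
    min (gromovProduct x y) (gromovProduct y z) ≤ gromovProduct x z :=
  min_commonPrefixLength_le _ _ _

lemma take_gromovProduct (x y : FreeGroup A) :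
    x.toWord.take (gromovProduct x y) = y.toWord.take (gromovProduct x y) :=
  take_commonPrefixLength _ _

lemma norm_lt_norm_mul_self {x : FreeGroup A} (hx : x ≠ 1) : x.norm < (x * x).norm := by
  have hred : FreeGroup.IsReduced x.toWord := FreeGroup.isReduced_toWord
  have hconj := FreeGroup.reduceCyclically.conj_conjugator_reduceCyclically x.toWord
  have hsq : (x * x).toWord = _ := (pow_two x ▸ FreeGroup.toWord_pow x 2).trans
    (FreeGroup.reduceCyclically.reduce_flatten_replicate_succ hred 1)
  have hpos : 0 < (FreeGroup.reduceCyclically x.toWord).length := by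
    refine List.length_pos_iff.2 fun hnil => hx ?_
    rw [← FreeGroup.mk_toWord (x := x), ← hconj, hnil, List.append_nil, ← FreeGroup.mul_mk,
      ← FreeGroup.inv_mk, mul_inv_cancel]
  have hnorm := congrArg List.length hconj
  simp only [FreeGroup.norm, hsq, List.length_append, List.length_flatten, List.map_replicate,
    List.sum_replicate, smul_eq_mul] at hnorm ⊢
  lia

lemma toWord_eq_take_append_invRev {x : FreeGroup A} {k : ℕ} (hk : x.norm = 2 * k) :
    x.toWord = x.toWord.take k ++ FreeGroup.invRev (x⁻¹.toWord.take k) := by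
  have hlen : x.toWord.length - k = k := by rw [← FreeGroup.norm, hk]; lia
  nth_rw 1 [← List.take_append_drop k x.toWord]
  simp [FreeGroup.toWord_inv, FreeGroup.invRev, List.take_reverse, hlen, Function.comp_def]

lemma toWord_mk_of_length_le_norm {l : List (A × Bool)} (h : l.length ≤ (FreeGroup.mk l).norm) :
    (FreeGroup.mk l).toWord = l := by
  rw [FreeGroup.toWord_mk]
  exact FreeGroup.reduce.red.sublist.eq_of_length_le (by rwa [← FreeGroup.toWord_mk])

lemma toWord_mul_of_length_le_norm {y z : FreeGroup A} {l m b : List (A × Bool)}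
    (hy : y.toWord = l ++ FreeGroup.invRev m) (hz : z.toWord = m ++ b)
    (hyz : (l ++ b).length ≤ (y * z).norm) : (y * z).toWord = l ++ b := by
  have hmk : y * z = FreeGroup.mk (l ++ b) := by
    rw [← FreeGroup.mk_toWord (x := y), ← FreeGroup.mk_toWord (x := z), hy, hz]
    simp only [← FreeGroup.mul_mk, ← FreeGroup.inv_mk]
    group
  rw [hmk] at hyz ⊢
  exact toWord_mk_of_length_le_norm hyz

end GromovProduct

section NielsenWeight

variable {A : Type*} [Fintype A]

/-- A word read as a numeral. The base exceeds the size of the alphabet, so that words of equal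
length are separated; the first letter is the most significant digit. -/
noncomputable def wordCode (l : List (A × Bool)) : ℕ :=
  Nat.ofDigits (Fintype.card (A × Bool) + 2)
    (l.reverse.map fun x => (Fintype.equivFin (A × Bool) x : ℕ))

lemma wordCode_append_lt {l m : List (A × Bool)} (h : wordCode l < wordCode m)
    (k : List (A × Bool)) : wordCode (l ++ k) < wordCode (m ++ k) := by
  simp only [wordCode, List.reverse_append, List.map_append, Nat.ofDigits_append]
  gcongr
  exact h

lemma eq_of_wordCode_eq {l m : List (A × Bool)} (hlen : l.length = m.length)
    (h : wordCode l = wordCode m) : l = m := by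
  have hdigit (l : List (A × Bool)) :
      ∀ d ∈ l.reverse.map fun x => (Fintype.equivFin (A × Bool) x : ℕ),
        d < Fintype.card (A × Bool) + 2 := by
    simp only [List.mem_map]
    rintro _ ⟨x, -, rfl⟩
    lia
  exact List.reverse_injective <| List.map_injective_iff.2
    (Fin.val_injective.comp (Fintype.equivFin _).injective) <|
    Nat.ofDigits_inj_of_len_eq (by lia) (by simpa using hlen) (hdigit l) (hdigit m) h

variable [DecidableEq A]

/-- The initial half of the reduced word of `x`, including the middle letter. -/
def initialHalf (x : FreeGroup A) : List (A × Bool) :=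
  x.toWord.take ((x.norm + 1) / 2)

/-- Nielsen's order on the free group: compare lengths first and break ties by the initial halves
of the element and of its inverse. -/
noncomputable def nielsenWeight (x : FreeGroup A) : ℕ ×ₗ ℕ :=
  toLex (x.norm, wordCode (initialHalf x) + wordCode (initialHalf x⁻¹))

@[simp] lemma nielsenWeight_inv (x : FreeGroup A) : nielsenWeight x⁻¹ = nielsenWeight x := by
  simp [nielsenWeight, add_comm]

lemma norm_le_of_nielsenWeight_le {x y : FreeGroup A} (h : nielsenWeight x ≤ nielsenWeight y) :
    x.norm ≤ y.norm :=
  (Prod.Lex.toLex_le_toLex'.1 h).1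

lemma nielsenWeight_lt_of_toWord_eq_append {x y : FreeGroup A} {l m b : List (A × Bool)}
    (hx : x.toWord = l ++ b) (hy : y.toWord = m ++ b) (hlen : l.length = m.length)
    (hmb : m.length ≤ b.length) (hcode : wordCode l < wordCode m) :
    nielsenWeight x < nielsenWeight y := by
  have hnorm : x.norm = y.norm := by simp [FreeGroup.norm, hx, hy, hlen]
  have hnorm' : y.norm = m.length + b.length := by simp [FreeGroup.norm, hy]
  have hinv : initialHalf x⁻¹ = initialHalf y⁻¹ := by
    have hb : (y.norm + 1) / 2 ≤ (FreeGroup.invRev b).length := by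
      rw [FreeGroup.invRev_length]; lia
    simp only [initialHalf, FreeGroup.norm_inv_eq, FreeGroup.toWord_inv, hx, hy, hnorm,
      FreeGroup.invRev_append, List.take_append_of_le_length hb]
  have hhalf : wordCode (initialHalf x) < wordCode (initialHalf y) := by
    rw [initialHalf, initialHalf, hx, hy, hnorm, List.take_append, List.take_append,
      List.take_of_length_le (l := l) (by lia), List.take_of_length_le (l := m) (by lia), hlen]
    exact wordCode_append_lt hcode _
  refine Prod.Lex.toLex_lt_toLex'.2 ⟨hnorm.le, fun _ => ?_⟩
  rw [hinv]
  exact Nat.add_lt_add_right hhalf _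

/-- The second half of `y` cancels against `z`, so `y * z` arises from `z` by replacing the inverse
of that half by the first half of `y`. -/
lemma nielsenWeight_mul_lt {y z : FreeGroup A} {k : ℕ} (hk : gromovProduct y⁻¹ z = k)
    (hy : y.norm = 2 * k) (hz : 2 * k ≤ z.norm)
    (hcode : wordCode (y.toWord.take k) < wordCode (y⁻¹.toWord.take k)) :
    nielsenWeight (y * z) < nielsenWeight z := by
  have hl : (y.toWord.take k).length = k := by
    rw [List.length_take, ← FreeGroup.norm]; lia
  have hm : (y⁻¹.toWord.take k).length = k := by
    rw [List.length_take, ← FreeGroup.norm, FreeGroup.norm_inv_eq]; lia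
  obtain ⟨b, hb⟩ : ∃ b, z.toWord = y⁻¹.toWord.take k ++ b :=
    ⟨z.toWord.drop k, by rw [← hk, take_gromovProduct, List.take_append_drop]⟩
  have hlenb : z.norm = k + b.length := by rw [FreeGroup.norm, hb, List.length_append, hm]
  have hnorm := norm_mul_add_two_mul_gromovProduct y z
  have hyz := toWord_mul_of_length_le_norm (toWord_eq_take_append_invRev hy) hb
    (by rw [List.length_append, hl]; lia)
  exact nielsenWeight_lt_of_toWord_eq_append hyz hb (hl.trans hm.symm) (by lia) hcode

/-- If `y` cancels entirely, one half against `x` and one half against `z`, then comparing the codes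
of its two halves decides which of the neighbours `y` improves. -/
lemma nielsenWeight_mul_lt_or_mul_lt {x y z : FreeGroup A} {k : ℕ} (hy_ne : y ≠ 1)
    (hxy : gromovProduct x⁻¹ y = k) (hyz : gromovProduct y⁻¹ z = k) (hy : y.norm = 2 * k)
    (hx : 2 * k ≤ x.norm) (hz : 2 * k ≤ z.norm) :
    nielsenWeight (x * y) < nielsenWeight x ∨ nielsenWeight (y * z) < nielsenWeight z := by
  rcases lt_trichotomy (wordCode (y.toWord.take k)) (wordCode (y⁻¹.toWord.take k))
    with hcode | hcode | hcode
  · exact Or.inr (nielsenWeight_mul_lt hyz hy hz hcode)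
  · have hhalf := eq_of_wordCode_eq
      (by simp only [List.length_take, FreeGroup.toWord_inv, FreeGroup.invRev_length]) hcode
    refine absurd ?_ hy_ne
    rw [← FreeGroup.mk_toWord (x := y), toWord_eq_take_append_invRev hy, ← hhalf,
      ← FreeGroup.mul_mk, ← FreeGroup.inv_mk, mul_inv_cancel]
  · left
    rw [← nielsenWeight_inv, ← nielsenWeight_inv x, mul_inv_rev]
    refine nielsenWeight_mul_lt (k := k) ?_ ?_ ?_ ?_
    · rw [inv_inv, gromovProduct_comm, hxy]
    · rwa [FreeGroup.norm_inv_eq]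
    · rwa [FreeGroup.norm_inv_eq]
    · rwa [inv_inv]

end NielsenWeight

section SignedEntry

variable {G : Type*} [Group G] {n : ℕ}

/-- The value of a letter of the free group on `n` generators under the substitution of the tuple
`T` for the generators. -/
def signedEntry (T : Fin n → G) (x : Fin n × Bool) : G :=
  cond x.2 (T x.1) (T x.1)⁻¹

lemma signedEntry_flip (T : Fin n → G) (x : Fin n × Bool) :
    signedEntry T (x.1, !x.2) = (signedEntry T x)⁻¹ := by
  obtain ⟨i, _ | _⟩ := x <;> simp [signedEntry]

lemma lift_eq_prod_map_signedEntry (T : Fin n → G) (w : FreeGroup (Fin n)) :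
    FreeGroup.lift T w = (w.toWord.map (signedEntry T)).prod := by
  conv_lhs => rw [← FreeGroup.mk_toWord (x := w), FreeGroup.lift_mk]
  rfl

end SignedEntry

section NielsenMinimal

variable {A : Type*} [DecidableEq A] [Fintype A] {n : ℕ} {T : Fin n → FreeGroup A}

/-- No entry is trivial, and multiplying an entry by another one or its inverse does not decrease
its weight. Such tuples are Nielsen reduced in the classical sense. -/
structure IsNielsenMinimal (T : Fin n → FreeGroup A) : Prop where
  ne_one : ∀ i, T i ≠ 1
  weight_le_mul : ∀ x y : Fin n × Bool, x.1 ≠ y.1 →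
    nielsenWeight (signedEntry T x) ≤ nielsenWeight (signedEntry T x * signedEntry T y)

namespace IsNielsenMinimal

lemma signedEntry_ne_one (h : IsNielsenMinimal T) (x : Fin n × Bool) : signedEntry T x ≠ 1 := by
  obtain ⟨i, _ | _⟩ := x <;> simpa [signedEntry] using h.ne_one i

lemma weight_le_mul_left (h : IsNielsenMinimal T) (x y : Fin n × Bool) (hxy : x.1 ≠ y.1) :
    nielsenWeight (signedEntry T y) ≤ nielsenWeight (signedEntry T x * signedEntry T y) := by
  have := h.weight_le_mul (y.1, !y.2) (x.1, !x.2) hxy.symm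
  rwa [signedEntry_flip, signedEntry_flip, ← mul_inv_rev, nielsenWeight_inv,
    nielsenWeight_inv] at this

lemma two_mul_gromovProduct_lt (h : IsNielsenMinimal T) (x : Fin n × Bool) :
    2 * gromovProduct (signedEntry T x)⁻¹ (signedEntry T x) < (signedEntry T x).norm := by
  have := norm_lt_norm_mul_self (h.signedEntry_ne_one x)
  have := norm_mul_add_two_mul_gromovProduct (signedEntry T x) (signedEntry T x)
  lia

lemma two_mul_gromovProduct_le (h : IsNielsenMinimal T) {x y : Fin n × Bool}
    (hxy : x.1 = y.1 → x.2 = y.2) :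
    2 * gromovProduct (signedEntry T x)⁻¹ (signedEntry T y) ≤ (signedEntry T x).norm ∧
      2 * gromovProduct (signedEntry T x)⁻¹ (signedEntry T y) ≤ (signedEntry T y).norm := by
  rcases eq_or_ne x.1 y.1 with heq | hne
  · obtain rfl := Prod.ext heq (hxy heq)
    exact ⟨(h.two_mul_gromovProduct_lt x).le, (h.two_mul_gromovProduct_lt x).le⟩
  · have hx := norm_le_of_nielsenWeight_le (h.weight_le_mul x y hne)
    have hy := norm_le_of_nielsenWeight_le (h.weight_le_mul_left x y hne)
    have := norm_mul_add_two_mul_gromovProduct (signedEntry T x) (signedEntry T y)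
    lia

lemma gromovProduct_add_lt (h : IsNielsenMinimal T) {x y z : Fin n × Bool}
    (hxy : x.1 = y.1 → x.2 = y.2) (hyz : y.1 = z.1 → y.2 = z.2) :
    gromovProduct (signedEntry T x)⁻¹ (signedEntry T y) +
      gromovProduct (signedEntry T y)⁻¹ (signedEntry T z) < (signedEntry T y).norm := by
  obtain ⟨hx, hy⟩ := h.two_mul_gromovProduct_le hxy
  obtain ⟨hy', hz⟩ := h.two_mul_gromovProduct_le hyz
  by_contra! hle
  have hxy_ne : x.1 ≠ y.1 := fun heq => by
    obtain rfl := Prod.ext heq (hxy heq)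
    have := h.two_mul_gromovProduct_lt x
    lia
  have hyz_ne : y.1 ≠ z.1 := fun heq => by
    obtain rfl := Prod.ext heq (hyz heq)
    have := h.two_mul_gromovProduct_lt y
    lia
  have heq : gromovProduct (signedEntry T y)⁻¹ (signedEntry T z) =
      gromovProduct (signedEntry T x)⁻¹ (signedEntry T y) := by lia
  rcases nielsenWeight_mul_lt_or_mul_lt (h.signedEntry_ne_one y) rfl heq (by lia) hx
    (by lia) with hlt | hlt
  · exact hlt.not_ge (h.weight_le_mul x y hxy_ne)
  · exact hlt.not_ge (h.weight_le_mul_left y z hyz_ne)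

/-- The last `r` letters of the last factor survive in a reduced product, and the next factor
cancels fewer than `r` letters. -/
lemma exists_surviving_letters (h : IsNielsenMinimal T) (l : List (Fin n × Bool)) :
    ∀ x, FreeGroup.IsReduced (l ++ [x]) →
      ∃ r ≤ gromovProduct ((l ++ [x]).map (signedEntry T)).prod⁻¹ (signedEntry T x)⁻¹,
        l.length + r ≤ ((l ++ [x]).map (signedEntry T)).prod.norm ∧
        ∀ y : Fin n × Bool, (x.1 = y.1 → x.2 = y.2) →
          gromovProduct (signedEntry T x)⁻¹ (signedEntry T y) < r := by
  induction l using List.reverseRecOn with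
  | nil =>
    refine fun x _ => ⟨(signedEntry T x).norm, by simp, by simp, fun y hxy => ?_⟩
    have := Nat.pos_of_ne_zero (FreeGroup.norm_eq_zero.not.2 (h.signedEntry_ne_one x))
    have := (h.two_mul_gromovProduct_le hxy).1
    lia
  | append_singleton l x ih =>
    intro y hred
    obtain ⟨r, hr, hlen, hlt⟩ := ih x (hred.infix ⟨[], [y], by simp⟩)
    have hxy : x.1 = y.1 → x.2 = y.2 := by
      have : FreeGroup.IsReduced [x, y] := hred.infix ⟨l, [], by simp⟩
      simpa using this
    rw [List.map_append, List.prod_append, List.map_singleton, List.prod_singleton,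
      List.length_append, List.length_singleton]
    set w := ((l ++ [x]).map (signedEntry T)).prod
    have hltxy := hlt y hxy
    have hxwy := min_gromovProduct_le (signedEntry T x)⁻¹ w⁻¹ (signedEntry T y)
    have hwxy := min_gromovProduct_le w⁻¹ (signedEntry T x)⁻¹ (signedEntry T y)
    rw [gromovProduct_comm _ w⁻¹] at hxwy
    have hnorm := norm_mul_add_two_mul_gromovProduct w (signedEntry T y)
    have hnorm' := norm_mul_add_two_mul_gromovProduct (w * signedEntry T y) (signedEntry T y)⁻¹
    rw [mul_inv_cancel_right, FreeGroup.norm_inv_eq] at hnorm'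
    have hle := (h.two_mul_gromovProduct_le hxy).2
    refine ⟨(signedEntry T y).norm - gromovProduct (signedEntry T x)⁻¹ (signedEntry T y),
      by lia, by lia, fun z hyz => ?_⟩
    have := h.gromovProduct_add_lt hxy hyz
    lia

theorem norm_le_norm_lift (h : IsNielsenMinimal T) (w : FreeGroup (Fin n)) :
    w.norm ≤ (FreeGroup.lift T w).norm := by
  have hred : FreeGroup.IsReduced w.toWord := FreeGroup.isReduced_toWord
  rw [lift_eq_prod_map_signedEntry, FreeGroup.norm]
  rcases List.eq_nil_or_concat' w.toWord with hw | ⟨l, x, hw⟩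
  · simp [hw]
  · rw [hw] at hred ⊢
    obtain ⟨r, -, hlen, hlt⟩ := h.exists_surviving_letters l x hred
    have := hlt x fun _ => rfl
    rw [List.length_append, List.length_singleton]
    lia

lemma lift_injective (h : IsNielsenMinimal T) : Function.Injective (FreeGroup.lift T) :=
  (injective_iff_map_eq_one _).2 fun w hw => FreeGroup.norm_eq_zero.1 <|
    Nat.le_zero.1 (by simpa [hw] using h.norm_le_norm_lift w)

end IsNielsenMinimal

end NielsenMinimal

section NielsenEquivalence

variable {G H : Type*} [Group G] [Group H] {n : ℕ} {T T' U : Fin n → G}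

namespace NielsenEquiv

lemma map (f : G →* H) (h : NielsenEquiv T T') : NielsenEquiv (f ∘ T) (f ∘ T') := by
  refine Relation.ReflTransGen.lift (f ∘ ·) (fun T T' hstep => ?_) _ _ h
  change NielsenStep (f ∘ T) (f ∘ T')
  cases hstep with
  | inv i => simpa [Function.comp_update] using NielsenStep.inv (f ∘ T) i
  | swap i j hij => exact .swap (f ∘ T) i j hij
  | mul i j hij => simpa [Function.comp_update] using NielsenStep.mul (f ∘ T) i j hij

lemma closure_range_le (h : NielsenEquiv T T') :
    Subgroup.closure (Set.range T) ≤ Subgroup.closure (Set.range T') := by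
  induction h with
  | refl => rfl
  | @tail S _ _ hstep ih =>
    refine ih.trans ((Subgroup.closure_le _).2 (Set.range_subset_iff.2 fun k => ?_))
    cases hstep with
    | inv i =>
      have hmem := fun k => Subgroup.subset_closure
        (Set.mem_range_self (f := Function.update S i (S i)⁻¹) k)
      rcases eq_or_ne k i with rfl | hk
      · simpa using hmem k
      · simpa [hk] using hmem k
    | swap i j => exact Subgroup.subset_closure ⟨Equiv.swap i j k, by simp⟩
    | mul i j hij =>
      have hmem := fun k => Subgroup.subset_closure
        (Set.mem_range_self (f := Function.update S i (S i * S j)) k)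
      rcases eq_or_ne k i with rfl | hk
      · simpa [hij.symm] using mul_mem (hmem k) (inv_mem (hmem j))
      · simpa [hk] using hmem k

lemma comp_perm (T : Fin n → G) (σ : Equiv.Perm (Fin n)) : NielsenEquiv T (T ∘ σ) := by
  induction σ using Equiv.Perm.swap_induction_on' with
  | one => exact .refl
  | mul_swap σ i j hij ih => exact ih.tail (.swap _ i j hij)

lemma of_eq_or_eq_inv (h : ∀ i, U i = T i ∨ U i = (T i)⁻¹) : NielsenEquiv T U := by
  suffices ∀ s : Finset (Fin n), NielsenEquiv T (s.piecewise U T) by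
    simpa using this Finset.univ
  intro s
  induction s using Finset.induction_on with
  | empty => exact Finset.piecewise_empty U T ▸ .refl
  | insert i s hi ih =>
    rw [Finset.piecewise_insert]
    rcases h i with hU | hU
    · rwa [hU, ← Finset.piecewise_eq_of_notMem s U T hi, Function.update_eq_self]
    · rw [hU, ← Finset.piecewise_eq_of_notMem s U T hi]
      exact ih.tail (.inv _ i)

lemma update_inv (T : Fin n → G) (i : Fin n) :
    NielsenEquiv T (Function.update T i (T i)⁻¹) :=
  .single (.inv T i)

lemma update_mul_signedEntry (T : Fin n → G) {i : Fin n} {y : Fin n × Bool} (hi : i ≠ y.1) :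
    NielsenEquiv T (Function.update T i (T i * signedEntry T y)) := by
  obtain ⟨j, _ | _⟩ := y
  · have h := ((update_inv T j).tail (.mul _ i j hi)).tail (.inv _ j)
    convert show NielsenEquiv T _ from h using 1
    ext k
    rcases eq_or_ne k j with rfl | hkj
    · simp [hi.symm, signedEntry]
    · rcases eq_or_ne k i with rfl | hki <;> simp [*, signedEntry]
  · exact .single (.mul T i j hi)

lemma exists_signedEntry_mul (T : Fin n → G) {x y : Fin n × Bool} (hxy : x.1 ≠ y.1) :
    ∃ T', NielsenEquiv T T' ∧ (∀ k ≠ x.1, T' k = T k) ∧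
      T' x.1 = signedEntry T x * signedEntry T y := by
  obtain ⟨i, _ | _⟩ := x
  · refine ⟨_, (update_inv T i).trans (update_mul_signedEntry _ hxy), fun k hk => ?_, ?_⟩
    · simp_all
    · simp [signedEntry, Function.update_of_ne (Ne.symm hxy)]
  · refine ⟨_, update_mul_signedEntry T hxy, fun k hk => ?_, ?_⟩
    · simp_all
    · simp [signedEntry]

lemma reducible (h : NielsenEquiv T T') {i : Fin n} (hi : T' i = 1) : Reducible T :=
  ⟨i.pos, _, h.trans (comp_perm T' (Equiv.swap i ⟨n - 1, by have := i.pos; lia⟩)), by simpa⟩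

end NielsenEquiv

lemma Reducible.map (f : G →* H) (h : Reducible T) : Reducible (f ∘ T) := by
  obtain ⟨hn, T', hT', h1⟩ := h
  exact ⟨hn, f ∘ T', hT'.map f, by simp [h1]⟩

end NielsenEquivalence

section FreeGroupGenerators

variable {A : Type*} [DecidableEq A] [Fintype A] {n : ℕ}

lemma exists_nielsenEquiv_isNielsenMinimal (T : Fin n → FreeGroup A) :
    ∃ T', NielsenEquiv T T' ∧ ((∃ i, T' i = 1) ∨ IsNielsenMinimal T') := by
  obtain ⟨T', hT', hmin⟩ := exists_minimalFor_of_wellFoundedLT (NielsenEquiv T)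
    (fun S => ∑ k, nielsenWeight (S k)) ⟨T, .refl⟩
  refine ⟨T', hT', or_iff_not_imp_left.2 fun hne => ⟨fun i hi => hne ⟨i, hi⟩, fun x y hxy => ?_⟩⟩
  obtain ⟨S, hS, hSk, hSx⟩ := NielsenEquiv.exists_signedEntry_mul T' hxy
  by_contra! hlt
  have hx : nielsenWeight (S x.1) < nielsenWeight (T' x.1) := by
    rw [hSx]
    refine hlt.trans_eq ?_
    obtain ⟨i, _ | _⟩ := x <;> simp [signedEntry]
  have hsum : ∑ k, nielsenWeight (S k) < ∑ k, nielsenWeight (T' k) := by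
    refine Finset.sum_lt_sum (fun k _ => ?_) ⟨x.1, Finset.mem_univ _, hx⟩
    rcases eq_or_ne k x.1 with rfl | hk
    · exact hx.le
    · rw [hSk k hk]
  exact hsum.not_ge (hmin (hT'.trans hS) hsum.le)

lemma IsNielsenMinimal.exists_eq_of_or_eq_inv {T : Fin n → FreeGroup A} (h : IsNielsenMinimal T)
    (hT : Subgroup.closure (Set.range T) = ⊤) :
    ∃ e : Fin n ≃ A, ∀ i, FreeGroup.of (e i) = T i ∨ FreeGroup.of (e i) = (T i)⁻¹ := by
  have hsurj : Function.Surjective (FreeGroup.lift T) := by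
    rw [← MonoidHom.range_eq_top, FreeGroup.range_lift_eq_closure, hT]
  have hcard : Fintype.card A = Fintype.card (Fin n) := Fintype.card_congr <|
    (Equiv.ofFreeGroupEquiv (MulEquiv.ofBijective _ ⟨h.lift_injective, hsurj⟩)).symm
  have hpre : ∀ a, ∃ i, FreeGroup.of a = T i ∨ FreeGroup.of a = (T i)⁻¹ := fun a => by
    obtain ⟨w, hw⟩ := hsurj (FreeGroup.of a)
    have hle := h.norm_le_norm_lift w
    rw [hw, FreeGroup.norm_of] at hle
    rw [lift_eq_prod_map_signedEntry] at hw
    rw [FreeGroup.norm] at hle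
    match w.toWord, hle, hw with
    | [], _, hw => exact absurd hw.symm (by simp)
    | [(i, false)], _, hw => exact ⟨i, .inr (by simpa [signedEntry] using hw.symm)⟩
    | [(i, true)], _, hw => exact ⟨i, .inl (by simpa [signedEntry] using hw.symm)⟩
    | _ :: _ :: _, hle, _ => simp at hle
  choose σ hσ using hpre
  have hinj : Function.Injective σ := fun a b hab => by
    have hne : FreeGroup.of a ≠ (FreeGroup.of b)⁻¹ := fun h => by
      simpa [FreeGroup.invRev] using congrArg FreeGroup.toWord h
    refine FreeGroup.of_injective ?_
    rcases hσ a with ha | ha <;> rcases hσ b with hb | hb <;> simp_all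
  let e := Equiv.ofBijective σ ((Fintype.bijective_iff_injective_and_card σ).2 ⟨hinj, hcard⟩)
  exact ⟨e.symm, fun i => by
    simpa only [show σ (e.symm i) = i from e.apply_symm_apply i] using hσ (e.symm i)⟩

theorem reducible_or_exists_nielsenEquiv_of {A : Type*} [Finite A] (T : Fin n → FreeGroup A)
    (hT : Subgroup.closure (Set.range T) = ⊤) :
    Reducible T ∨ ∃ e : Fin n ≃ A, NielsenEquiv T (FreeGroup.of ∘ e) := by
  classical
  have := Fintype.ofFinite A
  obtain ⟨T', hTT', ⟨i, hi⟩ | hmin⟩ := exists_nielsenEquiv_isNielsenMinimal T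
  · exact .inl (hTT'.reducible hi)
  · obtain ⟨e, he⟩ := hmin.exists_eq_of_or_eq_inv (top_le_iff.1 (hT ▸ hTT'.closure_range_le))
    exact .inr ⟨e, hTT'.trans (NielsenEquiv.of_eq_or_eq_inv he)⟩

end FreeGroupGenerators

/-! ### The orbifold groups -/

section OrbifoldPresentation

variable (p q : ℕ)

/-- The cyclic word `a₁a₁a₂a₂⋯a_pa_ps₁⋯s_{q+1}`, a prefix of length `2p` of paired letters
followed by the cone letters. -/
def orbifoldRelator (i : ZMod (2 * p + (q + 1))) : Fin p ⊕ Fin (q + 1) :=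
  if h : i.val < 2 * p then .inl ⟨i.val / 2, by lia⟩
  else .inr ⟨i.val - 2 * p, by have := i.val_lt; lia⟩

variable {p q}

lemma orbifoldRelator_eq_inl {i : ZMod (2 * p + (q + 1))} {k : Fin p} :
    orbifoldRelator p q i = .inl k ↔ i.val = 2 * k ∨ i.val = 2 * k + 1 := by
  have := k.isLt
  unfold orbifoldRelator
  split_ifs with h
  · simp only [Sum.inl.injEq, Fin.ext_iff]
    lia
  · simp only [false_iff]
    lia

lemma orbifoldRelator_eq_inr {i : ZMod (2 * p + (q + 1))} {k : Fin (q + 1)} :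
    orbifoldRelator p q i = .inr k ↔ i.val = 2 * p + k := by
  unfold orbifoldRelator
  split_ifs with h
  · simp only [false_iff]
    lia
  · simp only [Sum.inr.injEq, Fin.ext_iff]
    lia

lemma orbifoldRelator_natCast_inl {k : Fin p} {j : ℕ} (hj : j / 2 = k) :
    orbifoldRelator p q (j : ℕ) = .inl k := by
  rw [orbifoldRelator_eq_inl, ZMod.val_natCast, Nat.mod_eq_of_lt (by lia)]
  lia

lemma orbifoldRelator_natCast_inr (k : Fin (q + 1)) :
    orbifoldRelator p q ((2 * p + k : ℕ)) = .inr k := by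
  rw [orbifoldRelator_eq_inr, ZMod.val_natCast, Nat.mod_eq_of_lt (by lia)]

lemma orbifoldRelator_surjective : Function.Surjective (orbifoldRelator p q)
  | .inl k => ⟨(2 * k : ℕ), orbifoldRelator_natCast_inl (by lia)⟩
  | .inr k => ⟨_, orbifoldRelator_natCast_inr k⟩

lemma exists_orbifoldRelator_pair (k : Fin p) :
    ∃ j, orbifoldRelator p q j = .inl k ∧ orbifoldRelator p q (j + 1) = .inl k ∧
      ∀ i, orbifoldRelator p q i = .inl k → i = j ∨ i = j + 1 := by
  refine ⟨(2 * k : ℕ), orbifoldRelator_natCast_inl (by lia),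
    by exact_mod_cast orbifoldRelator_natCast_inl (j := 2 * k + 1) (by lia), fun i hi => ?_⟩
  refine (orbifoldRelator_eq_inl.1 hi).imp (fun hi => ?_) (fun hi => ?_) <;>
    simpa using congrArg (Nat.cast (R := ZMod (2 * p + (q + 1)))) hi

lemma cycProd_of_orbifoldRelator :
    cycProd (fun i => FreeGroup.of (orbifoldRelator p q i)) 0 = coneRelatorN p (q + 1) := by
  have hrange : ∀ g : ℕ → FreeGroup (Fin p ⊕ Fin (q + 1)),
      (List.range (2 * p + (q + 1))).map g = List.ofFn fun j : Fin _ => g j := fun g => by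
    rw [List.ofFn_eq_map, ← List.map_coe_finRange_eq_range, List.map_map]
    rfl
  rw [cycProd, hrange, List.ofFn_add, List.prod_append, List.ofFn_mul', List.prod_flatten,
    List.map_ofFn, coneRelatorN]
  congr 3
  · ext1 j
    have h : ∀ i : Fin 2, orbifoldRelator p q ((2 * j + i : ℕ)) = .inl j := fun i =>
      orbifoldRelator_natCast_inl (by lia)
    have := h 0
    have := h 1
    simp_all [pow_two]
  · ext1 i
    simpa using congrArg FreeGroup.of (orbifoldRelator_natCast_inr (p := p) i)

lemma coneRelatorN_succ :
    coneRelatorN p (q + 1) =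
      FreeGroup.map (Sum.map id Fin.castSucc) (coneRelatorN p q) *
        FreeGroup.of (.inr (Fin.last q)) := by
  simp only [coneRelatorN, map_mul, map_list_prod, List.map_ofFn, List.ofFn_succ' (n := q),
    List.concat_eq_append, List.prod_append, List.prod_singleton, mul_assoc]
  simp [Function.comp_def]

variable (p q)

/-- The solution of the relator `a₁²⋯a_p²s₁⋯s_{q+1}` in the free group on all generators but
`s_{q+1}`. -/
def orbifoldLift : Fin p ⊕ Fin (q + 1) → FreeGroup (Fin p ⊕ Fin q)
  | .inl j => FreeGroup.of (.inl j)
  | .inr i => Fin.lastCases (coneRelatorN p q)⁻¹ (fun i => FreeGroup.of (.inr i)) i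

/-- The map to the orbifold group of the free group on all generators but `s_{q+1}`. -/
def orbifoldProj : FreeGroup (Fin p ⊕ Fin q) →* PresentedGroup (coneRelsN p (q + 1)) :=
  (PresentedGroup.mk _).comp (FreeGroup.map (Sum.map id Fin.castSucc))

variable {p q}

lemma orbifoldLift_map (x : Fin p ⊕ Fin q) :
    orbifoldLift p q (Sum.map id Fin.castSucc x) = FreeGroup.of x := by
  cases x <;> simp [orbifoldLift]

lemma orbifoldLift_inr_last :
    orbifoldLift p q (.inr (Fin.last q)) = (coneRelatorN p q)⁻¹ := by
  simp [orbifoldLift]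

lemma lift_orbifoldLift_coneRelatorN :
    FreeGroup.lift (orbifoldLift p q) (coneRelatorN p (q + 1)) = 1 := by
  have h : (FreeGroup.lift (orbifoldLift p q)).comp (FreeGroup.map (Sum.map id Fin.castSucc)) =
      MonoidHom.id _ := by
    ext x
    simp [orbifoldLift_map]
  rw [coneRelatorN_succ, map_mul, ← MonoidHom.comp_apply, h, FreeGroup.lift_apply_of,
    orbifoldLift_inr_last, MonoidHom.id_apply, mul_inv_cancel]

lemma orbifoldProj_orbifoldLift (x : Fin p ⊕ Fin (q + 1)) :
    orbifoldProj p q (orbifoldLift p q x) = PresentedGroup.of x := by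
  have hrel : orbifoldProj p q (coneRelatorN p q) *
      PresentedGroup.of (rels := coneRelsN p (q + 1)) (.inr (Fin.last q)) = 1 := by
    have := PresentedGroup.one_of_mem (rels := coneRelsN p (q + 1)) (.inr rfl)
    rwa [coneRelatorN_succ, map_mul] at this
  rcases x with j | i
  · simp [orbifoldLift, orbifoldProj, PresentedGroup.of]
  · cases i using Fin.lastCases with
    | last => rw [orbifoldLift_inr_last, map_inv, inv_eq_of_mul_eq_one_right hrel]
    | cast i => simp [orbifoldLift, orbifoldProj, PresentedGroup.of]

lemma closure_range_orbifoldLift : Subgroup.closure (Set.range (orbifoldLift p q)) = ⊤ := by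
  rw [eq_top_iff, ← FreeGroup.closure_range_of, Subgroup.closure_le, Set.range_subset_iff]
  exact fun x => Subgroup.subset_closure ⟨_, orbifoldLift_map x⟩

lemma ker_lift_presentedGroup_of {X : Type*} (rels : Set (FreeGroup X)) :
    (FreeGroup.lift (PresentedGroup.of (rels := rels))).ker = Subgroup.normalClosure rels := by
  have h : FreeGroup.lift (PresentedGroup.of (rels := rels)) = PresentedGroup.mk rels := by
    ext x
    simp [PresentedGroup.of]
  rw [h]
  exact QuotientGroup.ker_mk' _

lemma coneRelsN_succ_eq :
    coneRelsN p (q + 1) = {w | ∃ x, x.isRight ∧ w = FreeGroup.of x * FreeGroup.of x} ∪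
      {cycProd (fun i => FreeGroup.of (orbifoldRelator p q i)) 0} := by
  ext w
  simp [coneRelsN, cycProd_of_orbifoldRelator, pow_two, Sum.isRight_iff, or_comm]

variable (p q)

/-- The presentation of the fundamental group of the orbifold of genus `p` with `q + 1` cone
points of order two, projecting from the free group on all generators but the last. -/
def orbifoldPresentation (hpq : 0 < p + q) :
    ConePresentation (Fin p ⊕ Fin (q + 1)) (PresentedGroup (coneRelsN p (q + 1)))
      (FreeGroup (Fin p ⊕ Fin q)) (2 * p + (q + 1)) where
  relator := orbifoldRelator p q
  IsCone x := x.isRight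
  gen := PresentedGroup.of
  lift := orbifoldLift p q
  proj := orbifoldProj p q
  one_ne_zero := by
    have : Fact (1 < 2 * p + (q + 1)) := ⟨by lia⟩
    exact one_ne_zero
  relator_surjective := orbifoldRelator_surjective
  exists_isCone := by
    obtain ⟨i, hi⟩ := orbifoldRelator_surjective (p := p) (.inr (Fin.last q))
    exact ⟨i, by simp [hi]⟩
  eq_of_isCone i j hi hij := by
    obtain ⟨k, hk⟩ := Sum.isRight_iff.1 hi
    rw [hk] at hij
    exact ZMod.val_injective _
      ((orbifoldRelator_eq_inr.1 hij).trans (orbifoldRelator_eq_inr.1 hk).symm)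
  exists_pair i hi := by
    obtain ⟨k, hk⟩ := Sum.isLeft_iff.1 (Sum.not_isRight.1 hi)
    exact hk ▸ exists_orbifoldRelator_pair k
  closure_range_gen := PresentedGroup.closure_range_of _
  ker_lift_gen := by rw [ker_lift_presentedGroup_of, coneRelsN_succ_eq]
  proj_lift := orbifoldProj_orbifoldLift
  cycProd_lift := by
    have h := map_cycProd (FreeGroup.lift (orbifoldLift p q))
      (fun i => FreeGroup.of (orbifoldRelator p q i)) 0
    rw [cycProd_of_orbifoldRelator, lift_orbifoldLift_coneRelatorN] at h
    simpa using h.symm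
  closure_range_lift := closure_range_orbifoldLift

end OrbifoldPresentation

theorem nielsen_nonorientable_orbifold_order_two_general (p q : ℕ) (hpq : 0 < p + q) {n : ℕ}
    (T : Fin n → PresentedGroup (coneRelsN p (q + 1)))
    (hT : Subgroup.closure (Set.range T) = ⊤) :
    Reducible T ∨ ∃ hn : n = p + q, NielsenEquiv T fun j =>
      PresentedGroup.of (Sum.map id Fin.castSucc (finSumFinEquiv.symm (Fin.cast hn j))) := by
  obtain ⟨t, hproj, ht⟩ := (orbifoldPresentation p q hpq).exists_generating_lift T hT
  obtain rfl : orbifoldProj p q ∘ t = T := funext hproj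
  refine (reducible_or_exists_nielsenEquiv_of t ht).imp (Reducible.map _) ?_
  rintro ⟨e, he⟩
  have hn : n = p + q := by simpa using Fintype.card_congr e
  have hperm := he.trans
    (NielsenEquiv.comp_perm _ (((finCongr hn).trans finSumFinEquiv.symm).trans e.symm))
  refine ⟨hn, ?_⟩
  convert NielsenEquiv.map (orbifoldProj p q) hperm using 2 with j
  simp [orbifoldProj, PresentedGroup.of]

/-- Every generating `n`-tuple of the fundamental group
`⟨a₁,…,a_p, s₁,…,s_r ∣ s₁²,…,s_r², a₁²a₂²⋯a_p²·s₁s₂⋯s_r⟩` of the closed non-orientable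
2-orbifold of genus `p ≥ 1` with `r ≥ 1` cone points of order `2` (where `p ≥ 2` or
`r ≥ 2`) is either reducible, or `n = p + r − 1` and the tuple is Nielsen equivalent to
`(a₁,…,a_p, s₁,…,s_{i−1}, s_{i+1},…,s_r)` for some index `i`. -/
theorem nielsen_nonorientable_orbifold_order_two (p r : ℕ) (hp : 1 ≤ p) (hr : 1 ≤ r)
    (hlarge : 2 ≤ p ∨ 2 ≤ r) {n : ℕ}
    (T : Fin n → PresentedGroup (coneRelsN p r))
    (hT : Subgroup.closure (Set.range T) = ⊤) :
    Reducible T ∨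
    ∃ (hn : n = p + r - 1) (i : Fin r),
      NielsenEquiv T (fun j : Fin n =>
        if hj : (j : ℕ) < p then
          PresentedGroup.of (Sum.inl (⟨(j : ℕ), hj⟩ : Fin p))
        else
          PresentedGroup.of (Sum.inr
            (if _hlt : (j : ℕ) - p < (i : ℕ) then
              (⟨(j : ℕ) - p, by have := i.isLt; omega⟩ : Fin r)
            else
              (⟨(j : ℕ) - p + 1, by have := j.isLt; omega⟩ : Fin r)))) := by
  obtain ⟨q, rfl⟩ := Nat.exists_eq_add_of_le' hr
  refine (nielsen_nonorientable_orbifold_order_two_general p q (by lia) T hT).imp_right ?_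
  rintro ⟨rfl, hT⟩
  refine ⟨rfl, Fin.last q, ?_⟩
  convert hT using 2 with j
  cases j using Fin.addCases with
  | left j => simp
  | right j => simp [Fin.castSucc, Fin.castAdd, Fin.castLE]
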